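/- arXiv:2407.15183 — 2 statements merged into one kernel-verified Lean document; each statement's English description precedes it below -/
import Mathlib

section
/- Let m, n, c be positive integers with c ≡ 1 (mod 4), m ≡ 1 (mod 4) and n ≡ 3 (mod 4). If m ≥ 9, n ≥ 7, and (m, n) ≠ (9, 7), then there exists an integer Heffter array set IHS(m, n; c). -/
/-- An integer Heffter array set `IHS(m, n; c)`: a family of `c` totally filled
`m × n` integer arrays such that the absolute values of all `c·m·n` entries are
pairwise distinct and their set is exactly `{1, …, m·n·c}`, and every row and
column of each array sums to `0`. -/
def IsIHS (m n c : ℕ) (A : Fin c → Matrix (Fin m) (Fin n) ℤ) : Prop :=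
  Function.Injective (fun p : Fin c × Fin m × Fin n => |A p.1 p.2.1 p.2.2|) ∧
  (∀ x : ℤ, (1 ≤ x ∧ x ≤ (m : ℤ) * n * c) ↔ ∃ l i j, |A l i j| = x) ∧
  (∀ l i, ∑ j, A l i j = 0) ∧
  (∀ l j, ∑ i, A l i j = 0)

/-!
Write `c = 4k + 1`, `m = 9 + 4a`, `n = 3 + 4b`. Every array is cut into a `9 × 3` corner, `b`
blocks of size `9 × 4` to its right, `a` blocks of size `4 × 3` below it and `ab` blocks of size
`4 × 4`, each block having zero row and column sums. Since an array has `mn` entries, it suffices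
by counting that every integer in `[1, mnc]` occurs as an absolute value.

The `4 × 4` blocks and the lower `6 × 4` parts of the `9 × 4` blocks are shiftable: in each row
and column half of the entries are positive, so that all absolute values may be raised by the same
amount. They take the values above `12N + 27`, where `N = 9k + c(a + b)`. The values up to
`12N + 27` split into `27` numbers, which fill one corner, and four sequences of `N` triples
`(s, p, q)` with `s + p = q`. In each sequence, nine consecutive triples form the rows of a corner
whose columns sum to zero as well; four triples with the same position in the four sequences form
a `3 × 4` block.
-/

open scoped Matrix

/-- The matrices `M q` written side by side. -/
def rowStrip {α β Q R : Type*} (M : Q → Matrix α β R) : Matrix α (Q × β) R :=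
  Matrix.of fun i j => M j.1 i j.2

section ZeroLineSums

variable {α α' β β' P Q R : Type*} [Fintype α] [Fintype α'] [Fintype β] [Fintype β']
  [Fintype P] [Fintype Q] [Semiring R]

variable (α β R) in
/-- The matrices all of whose row sums and column sums vanish. Being a submodule, they can be
checked coefficientwise when the entries are linear in parameters. -/
def zeroLineSums : Submodule R (Matrix α β R) where
  carrier := {A | (∀ i, ∑ j, A i j = 0) ∧ ∀ j, ∑ i, A i j = 0}
  zero_mem' := by simp
  add_mem' := by
    rintro A B ⟨hAr, hAc⟩ ⟨hBr, hBc⟩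
    simp [Finset.sum_add_distrib, hAr, hAc, hBr, hBc]
  smul_mem' := by
    rintro r A ⟨hr, hc⟩
    simp [← Finset.mul_sum, hr, hc]

theorem mem_zeroLineSums {A : Matrix α β R} :
    A ∈ zeroLineSums α β R ↔ (∀ i, ∑ j, A i j = 0) ∧ ∀ j, ∑ i, A i j = 0 :=
  Iff.rfl

theorem transpose_mem_zeroLineSums {A : Matrix α β R} (hA : A ∈ zeroLineSums α β R) :
    Aᵀ ∈ zeroLineSums β α R :=
  And.symm hA

theorem submatrix_mem_zeroLineSums {A : Matrix α β R} (hA : A ∈ zeroLineSums α β R)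
    (e : α' ≃ α) (f : β' ≃ β) : A.submatrix e f ∈ zeroLineSums α' β' R :=
  ⟨fun i => (f.sum_comp fun j => A (e i) j).trans (hA.1 _),
    fun j => (e.sum_comp fun i => A i (f j)).trans (hA.2 _)⟩

theorem fromRows_mem_zeroLineSums {A : Matrix α β R} {B : Matrix α' β R}
    (hA : A ∈ zeroLineSums α β R) (hB : B ∈ zeroLineSums α' β R) :
    A.fromRows B ∈ zeroLineSums (α ⊕ α') β R :=
  ⟨Sum.rec hA.1 hB.1, fun j => by simp [hA.2 j, hB.2 j]⟩

theorem fromCols_mem_zeroLineSums {A : Matrix α β R} {B : Matrix α β' R}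
    (hA : A ∈ zeroLineSums α β R) (hB : B ∈ zeroLineSums α β' R) :
    A.fromCols B ∈ zeroLineSums α (β ⊕ β') R :=
  ⟨fun i => by simp [hA.1 i, hB.1 i], Sum.rec hA.2 hB.2⟩

theorem comp_mem_zeroLineSums {M : Matrix P Q (Matrix α β R)}
    (hM : ∀ p q, M p q ∈ zeroLineSums α β R) :
    Matrix.comp P Q α β R M ∈ zeroLineSums (P × α) (Q × β) R :=
  ⟨fun i => by simp [Fintype.sum_prod_type, (hM _ _).1],
    fun j => by simp [Fintype.sum_prod_type, (hM _ _).2]⟩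

theorem rowStrip_mem_zeroLineSums {M : Q → Matrix α β R} (hM : ∀ q, M q ∈ zeroLineSums α β R) :
    rowStrip M ∈ zeroLineSums α (Q × β) R :=
  ⟨fun i => by simp [rowStrip, Fintype.sum_prod_type, (hM _).1],
    fun j => (hM j.1).2 j.2⟩

end ZeroLineSums

section Reindexing

theorem injective_and_image_eq_of_subset_image {ι κ : Type*} [Fintype ι] [DecidableEq κ]
    {f : ι → κ} {s : Finset κ} (hs : s ⊆ Finset.univ.image f) (hcard : Fintype.card ι ≤ s.card) :
    Function.Injective f ∧ Finset.univ.image f = s := by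
  have himage : (Finset.univ.image f).card ≤ Fintype.card ι := Finset.card_image_le
  have heq : s = Finset.univ.image f :=
    Finset.eq_of_subset_of_card_le hs (himage.trans hcard)
  refine ⟨?_, heq.symm⟩
  rw [← Set.injOn_univ, ← Finset.coe_univ]
  exact Finset.card_image_iff.1 (himage.antisymm (heq ▸ hcard))

theorem isIHS_of_exists_abs_eq {m n c : ℕ} {A : Fin c → Matrix (Fin m) (Fin n) ℤ}
    (hA : ∀ l, A l ∈ zeroLineSums (Fin m) (Fin n) ℤ)
    (hcover : ∀ x : ℤ, 1 ≤ x → x ≤ m * n * c → ∃ l i j, |A l i j| = x) : IsIHS m n c A := by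
  let f (p : Fin c × Fin m × Fin n) : ℤ := |A p.1 p.2.1 p.2.2|
  have hsub : Finset.Icc 1 ((m : ℤ) * n * c) ⊆ Finset.univ.image f := fun x hx => by
    obtain ⟨l, i, j, h⟩ := hcover x (Finset.mem_Icc.1 hx).1 (Finset.mem_Icc.1 hx).2
    exact Finset.mem_image.2 ⟨(l, i, j), Finset.mem_univ _, h⟩
  have hcard : Fintype.card (Fin c × Fin m × Fin n) ≤ (Finset.Icc 1 ((m : ℤ) * n * c)).card := by
    simp only [Fintype.card_prod, Fintype.card_fin, Int.card_Icc, add_sub_cancel_right]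
    exact_mod_cast (mul_comm c (m * n)).le
  obtain ⟨hinj, himage⟩ := injective_and_image_eq_of_subset_image hsub hcard
  refine ⟨hinj, fun x => ⟨fun hx => hcover x hx.1 hx.2, ?_⟩, fun l => (hA l).1, fun l => (hA l).2⟩
  rintro ⟨l, i, j, h⟩
  rw [← Finset.mem_Icc, ← himage]
  exact Finset.mem_image.2 ⟨(l, i, j), Finset.mem_univ _, h⟩

theorem exists_isIHS_of_exists_abs_eq {γ α β : Type*} [Fintype γ] [Fintype α] [Fintype β]
    {m n c : ℕ} (hα : Fintype.card α = m) (hβ : Fintype.card β = n) (hγ : Fintype.card γ = c)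
    {A : γ → Matrix α β ℤ} (hA : ∀ l, A l ∈ zeroLineSums α β ℤ)
    (hcover : ∀ x : ℤ, 1 ≤ x → x ≤ m * n * c → ∃ l i j, |A l i j| = x) :
    ∃ A : Fin c → Matrix (Fin m) (Fin n) ℤ, IsIHS m n c A := by
  let rows := Fintype.equivFinOfCardEq hα
  let cols := Fintype.equivFinOfCardEq hβ
  let arrays := Fintype.equivFinOfCardEq hγ
  refine ⟨fun l => (A (arrays.symm l)).submatrix rows.symm cols.symm, isIHS_of_exists_abs_eq
    (fun l => submatrix_mem_zeroLineSums (hA _) _ _) fun x hx₁ hx => ?_⟩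
  obtain ⟨l, i, j, h⟩ := hcover x hx₁ hx
  exact ⟨arrays l, rows i, cols j, by
    simpa only [Matrix.submatrix_apply, Equiv.symm_apply_apply] using h⟩

end Reindexing

section Shift

variable {α β : Type*}

/-- The matrix `M` with all absolute values raised by `B` and all signs kept (entries `0` stay
`0`). If `M` has zero line sums and is *shiftable*, i.e. each of its lines has as many positive as
negative entries, then its shifts have zero line sums too. -/
def signedShift (B : ℤ) (M : Matrix α β ℤ) : Matrix α β ℤ :=
  B • M.map Int.sign + M

theorem signedShift_mem_zeroLineSums [Fintype α] [Fintype β] {M : Matrix α β ℤ}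
    (hM : M ∈ zeroLineSums α β ℤ) (hsign : M.map Int.sign ∈ zeroLineSums α β ℤ) (B : ℤ) :
    signedShift B M ∈ zeroLineSums α β ℤ :=
  add_mem (Submodule.smul_mem _ B hsign) hM

theorem abs_signedShift_apply {B : ℤ} {M : Matrix α β ℤ} {i : α} {j : β} (hB : 0 ≤ B)
    (hM : M i j ≠ 0) : |signedShift B M i j| = B + |M i j| := by
  have heq : signedShift B M i j = (M i j).sign * (B + |M i j|) := by
    rw [mul_add, Int.sign_mul_abs, mul_comm]
    rfl
  rw [heq, abs_mul, Int.abs_sign_of_ne_zero hM, one_mul, abs_of_nonneg (by positivity)]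

/-- The position of `i` in a fixed enumeration of the finite type `ι`, counted from `0`. -/
noncomputable def enumIndex {ι : Type*} [Fintype ι] (i : ι) : ℤ :=
  (Fintype.equivFin ι i : ℕ)

theorem enumIndex_nonneg {ι : Type*} [Fintype ι] (i : ι) : 0 ≤ enumIndex i :=
  Int.natCast_nonneg _

theorem exists_enumIndex_eq {ι : Type*} [Fintype ι] {t : ℤ} (ht₀ : 0 ≤ t)
    (ht : t < Fintype.card ι) :
    ∃ i : ι, enumIndex i = t := by
  lift t to ℕ using ht₀
  exact ⟨(Fintype.equivFin ι).symm ⟨t, by exact_mod_cast ht⟩, by simp [enumIndex]⟩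

theorem exists_abs_signedShift_eq {ι : Type*} [Fintype ι] {M : Matrix α β ℤ} {w S x : ℤ}
    (hM : ∀ v ∈ Finset.Icc 1 w, ∃ i j, |M i j| = v) (hw : 0 < w) (hS : 0 ≤ S) (hSx : S < x)
    (hx : x ≤ S + w * Fintype.card ι) :
    ∃ (q : ι) (i : α) (j : β), |signedShift (S + w * enumIndex q) M i j| = x := by
  obtain ⟨u, rfl⟩ : ∃ u, x = S + 1 + u := ⟨x - (S + 1), by ring⟩
  obtain ⟨q, hq⟩ : ∃ q : ι, enumIndex q = u / w :=
    exists_enumIndex_eq (Int.ediv_nonneg (by linarith) hw.le)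
      (Int.ediv_lt_of_lt_mul hw (by linarith [mul_comm w (Fintype.card ι)]))
  have hmod₀ : 0 ≤ u % w := Int.emod_nonneg u hw.ne'
  have hmod : u % w < w := Int.emod_lt_of_pos u hw
  obtain ⟨i, j, hij⟩ := hM (u % w + 1) (Finset.mem_Icc.2 ⟨by linarith, by linarith⟩)
  have hne : M i j ≠ 0 := abs_pos.1 (by linarith)
  have hB : 0 ≤ S + w * enumIndex q := add_nonneg hS (mul_nonneg hw.le (enumIndex_nonneg q))
  refine ⟨q, i, j, ?_⟩
  rw [abs_signedShift_apply hB hne, hij, hq]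
  linarith [Int.mul_ediv_add_emod u w]

/-- A shiftable `4 × 4` array whose absolute values are `1, …, 16`. -/
def shiftable44 : Matrix (Fin 4) (Fin 4) ℤ :=
  !![1, -2, -3, 4; -5, 6, 7, -8; -9, 10, 11, -12; 13, -14, -15, 16]

/-- A shiftable `6 × 4` array whose absolute values are `1, …, 24`. -/
def shiftable64 : Matrix (Fin 6) (Fin 4) ℤ :=
  !![23, -8, 3, -18; -19, 17, -22, 24; 4, -9, 21, -16; -1, 2, -6, 5; 13, -14, 11, -10;
    -20, 12, -7, 15]

theorem signedShift_shiftable44_mem_zeroLineSums (B : ℤ) :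
    signedShift B shiftable44 ∈ zeroLineSums (Fin 4) (Fin 4) ℤ :=
  signedShift_mem_zeroLineSums (mem_zeroLineSums.2 (by decide)) (mem_zeroLineSums.2 (by decide)) B

theorem signedShift_shiftable64_mem_zeroLineSums (B : ℤ) :
    signedShift B shiftable64 ∈ zeroLineSums (Fin 6) (Fin 4) ℤ :=
  signedShift_mem_zeroLineSums (mem_zeroLineSums.2 (by decide)) (mem_zeroLineSums.2 (by decide)) B

theorem exists_abs_shiftable44_eq : ∀ v ∈ Finset.Icc (1 : ℤ) 16, ∃ i j, |shiftable44 i j| = v := by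
  decide

theorem exists_abs_shiftable64_eq : ∀ v ∈ Finset.Icc (1 : ℤ) 24, ∃ i j, |shiftable64 i j| = v := by
  decide

end Shift

section Triples

/-- The triple `(s, p, -q)` with `s + p = q` at position `t` of the sequence of triples that
starts with `(s₀, p₀, -(s₀ + p₀))`; from one triple to the next, `s` grows by `2`, `p` decreases
by `1` and `q` grows by `1`. -/
def zeroTriple (s₀ p₀ t : ℤ) : Fin 3 → ℤ :=
  ![s₀ + 2 * t, p₀ - t, -(s₀ + p₀ + t)]

theorem sum_zeroTriple (s₀ p₀ t : ℤ) : ∑ d, zeroTriple s₀ p₀ t d = 0 := by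
  simp only [zeroTriple, Fin.sum_univ_three, Matrix.cons_val]
  ring

/-- The signs of the nine triples in a `9 × 3` corner. -/
def cornerSign : Fin 9 → ℤ :=
  ![1, 1, -1, 1, 1, -1, 1, 1, -1]

/-- The positions, among nine consecutive ones, of the triples in the rows of a `9 × 3` corner. -/
def cornerPosition : Fin 9 → ℤ :=
  ![8, 0, 5, 7, 1, 4, 6, 2, 3]

/-- Row `i` lists the order in which the members of the `i`-th triple are written into a `9 × 3`
corner. -/
def cornerOrder : Fin 9 → Fin 3 → Fin 3 :=
  ![![2, 1, 0], ![2, 1, 0], ![0, 2, 1], ![0, 2, 1], ![2, 0, 1], ![2, 1, 0], ![1, 0, 2],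
    ![0, 2, 1], ![2, 0, 1]]

/-- The `9 × 3` array formed by the triples at positions `u, …, u + 8` of a sequence, with signs,
row order and order within the rows chosen such that the columns sum to zero. -/
def tripleCorner (s₀ p₀ u : ℤ) : Matrix (Fin 9) (Fin 3) ℤ :=
  Matrix.of fun i j => cornerSign i * zeroTriple s₀ p₀ (u + cornerPosition i) (cornerOrder i j)

theorem tripleCorner_mem_zeroLineSums (s₀ p₀ u : ℤ) :
    tripleCorner s₀ p₀ u ∈ zeroLineSums (Fin 9) (Fin 3) ℤ := by
  have hbij : ∀ i, Function.Bijective (cornerOrder i) := by decide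
  refine mem_zeroLineSums.2 ⟨fun i => ?_, fun j => ?_⟩
  · simp only [tripleCorner, Matrix.of_apply, ← Finset.mul_sum, (hbij i).sum_comp, sum_zeroTriple,
      mul_zero]
  · fin_cases j <;>
      simp [tripleCorner, zeroTriple, cornerSign, cornerPosition, cornerOrder,
        Fin.sum_univ_succ] <;> ring

theorem exists_abs_tripleCorner_eq (s₀ p₀ u : ℤ) {y : ℤ} (hy : y ∈ Finset.Ico 0 9) (d : Fin 3) :
    ∃ i j, |tripleCorner s₀ p₀ u i j| = |zeroTriple s₀ p₀ (u + y) d| := by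
  have hcover : ∀ y ∈ Finset.Ico (0 : ℤ) 9, ∀ d, ∃ i j,
      cornerPosition i = y ∧ cornerOrder i j = d := by decide
  have hsign : ∀ i, |cornerSign i| = 1 := by decide
  obtain ⟨i, j, rfl, rfl⟩ := hcover y hy d
  exact ⟨i, j, by simp [tripleCorner, abs_mul, hsign]⟩

/-- The values `s₀` at which the four sequences of triples start. -/
def sequenceS (N : ℤ) : Fin 4 → ℤ :=
  ![1, 2, 2 * N + 5, 2 * N + 6]

/-- The values `p₀` at which the four sequences of triples start. -/
def sequenceP (N : ℤ) : Fin 4 → ℤ :=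
  ![6 * N + 13, 10 * N + 21, 5 * N + 11, 9 * N + 19]

/-- The triple at position `t` of the `g`-th of four sequences. For `0 ≤ t < N` the absolute values
of their members are distinct and exhaust `[1, 12 * N + 27]` up to `27` numbers. -/
def sequenceTriple (N : ℤ) (g : Fin 4) : ℤ → Fin 3 → ℤ :=
  zeroTriple (sequenceS N g) (sequenceP N g)

/-- The four triples at position `t` as the columns of a `3 × 4` array. The signs `+, -, -, +`
make the rows sum to zero, since the starting triples of the first two sequences differ by as much
as those of the last two. -/
def tripleBlock (N t : ℤ) : Matrix (Fin 3) (Fin 4) ℤ :=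
  Matrix.of fun d g => ![1, -1, -1, 1] g * sequenceTriple N g t d

theorem tripleBlock_mem_zeroLineSums (N t : ℤ) :
    tripleBlock N t ∈ zeroLineSums (Fin 3) (Fin 4) ℤ := by
  refine mem_zeroLineSums.2 ⟨fun d => ?_, fun g => ?_⟩
  · fin_cases d <;>
      simp [tripleBlock, sequenceTriple, sequenceS, sequenceP, zeroTriple,
        Fin.sum_univ_succ] <;> ring
  · simp only [tripleBlock, Matrix.of_apply, ← Finset.mul_sum, sequenceTriple, sum_zeroTriple,
      mul_zero]

theorem abs_tripleBlock_apply (N t : ℤ) (d : Fin 3) (g : Fin 4) :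
    |tripleBlock N t d g| = |sequenceTriple N g t d| := by
  have hsign : ∀ g : Fin 4, |(![1, -1, -1, 1] g : ℤ)| = 1 := by decide
  simp only [tripleBlock, Matrix.of_apply, abs_mul, hsign, one_mul]

/-- The property of being the absolute value of a member of one of the first `N` triples in the
four sequences. -/
def IsTripleMember (N x : ℤ) : Prop :=
  ∃ g d t, 0 ≤ t ∧ t < N ∧ |sequenceTriple N g t d| = x

theorem isTripleMember_of_mem_s {N x : ℤ}
    (hx : 1 ≤ x ∧ x ≤ 2 * N ∨ 2 * N + 5 ≤ x ∧ x ≤ 4 * N + 4) : IsTripleMember N x := by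
  have hx₀ : 0 ≤ x := by omega
  obtain ⟨g, t, ht₀, ht, hst⟩ : ∃ g t, 0 ≤ t ∧ t < N ∧ sequenceS N g + 2 * t = x := by
    rcases Int.even_or_odd' x with ⟨y, hy | hy⟩ <;> rcases hx with hx | hx
    · exact ⟨1, y - 1, by omega, by omega, by simp only [sequenceS, Matrix.cons_val]; omega⟩
    · exact ⟨3, y - N - 3, by omega, by omega, by simp only [sequenceS, Matrix.cons_val]; omega⟩
    · exact ⟨0, y, by omega, by omega, by simp only [sequenceS, Matrix.cons_val]; omega⟩
    · exact ⟨2, y - N - 2, by omega, by omega, by simp only [sequenceS, Matrix.cons_val]; omega⟩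
  exact ⟨g, 0, t, ht₀, ht, (abs_eq hx₀).2 (.inl hst)⟩

theorem isTripleMember_of_mem_p {N x : ℤ}
    (hx : 4 * N + 12 ≤ x ∧ x ≤ 5 * N + 11 ∨ 5 * N + 14 ≤ x ∧ x ≤ 6 * N + 13 ∨
      8 * N + 20 ≤ x ∧ x ≤ 9 * N + 19 ∨ 9 * N + 22 ≤ x ∧ x ≤ 10 * N + 21) :
    IsTripleMember N x := by
  have hx₀ : 0 ≤ x := by omega
  obtain ⟨g, hg₀, hg⟩ : ∃ g, 0 ≤ sequenceP N g - x ∧ sequenceP N g - x < N := by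
    rcases hx with hx | hx | hx | hx
    · exact ⟨2, by simp only [sequenceP, Matrix.cons_val]; omega⟩
    · exact ⟨0, by simp only [sequenceP, Matrix.cons_val]; omega⟩
    · exact ⟨3, by simp only [sequenceP, Matrix.cons_val]; omega⟩
    · exact ⟨1, by simp only [sequenceP, Matrix.cons_val]; omega⟩
  exact ⟨g, 1, sequenceP N g - x, hg₀, hg, (abs_eq hx₀).2 (.inl (sub_sub_cancel _ _))⟩

theorem isTripleMember_of_mem_q {N x : ℤ}
    (hx : 6 * N + 14 ≤ x ∧ x ≤ 7 * N + 13 ∨ 7 * N + 16 ≤ x ∧ x ≤ 8 * N + 15 ∨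
      10 * N + 23 ≤ x ∧ x ≤ 11 * N + 22 ∨ 11 * N + 25 ≤ x ∧ x ≤ 12 * N + 24) :
    IsTripleMember N x := by
  have hx₀ : 0 ≤ x := by omega
  obtain ⟨g, hg₀, hg⟩ : ∃ g, 0 ≤ x - (sequenceS N g + sequenceP N g) ∧
      x - (sequenceS N g + sequenceP N g) < N := by
    rcases hx with hx | hx | hx | hx
    · exact ⟨0, by simp only [sequenceS, sequenceP, Matrix.cons_val]; omega⟩
    · exact ⟨2, by simp only [sequenceS, sequenceP, Matrix.cons_val]; omega⟩
    · exact ⟨1, by simp only [sequenceS, sequenceP, Matrix.cons_val]; omega⟩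
    · exact ⟨3, by simp only [sequenceS, sequenceP, Matrix.cons_val]; omega⟩
  exact ⟨g, 2, _, hg₀, hg, (abs_eq hx₀).2 (.inr (congrArg Neg.neg (add_sub_cancel _ _)))⟩

end Triples

section Leftovers

/-- The pairs `(a, b)` such that `a * N + b` is not a member of a triple in the four sequences. The
second components run through `1, …, 27`. -/
noncomputable def leftovers : Finset (ℤ × ℤ) :=
  {2} ×ˢ .Icc 1 4 ∪ {4} ×ˢ .Icc 5 11 ∪ {5} ×ˢ .Icc 12 13 ∪ {7} ×ˢ .Icc 14 15 ∪
    {8} ×ˢ .Icc 16 19 ∪ {9} ×ˢ .Icc 20 21 ∪ {10} ×ˢ {22} ∪ {11} ×ˢ .Icc 23 24 ∪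
    {12} ×ˢ .Icc 25 27

theorem mem_leftovers {a b : ℤ} :
    (a, b) ∈ leftovers ↔ a = 2 ∧ 1 ≤ b ∧ b ≤ 4 ∨ a = 4 ∧ 5 ≤ b ∧ b ≤ 11 ∨
      a = 5 ∧ 12 ≤ b ∧ b ≤ 13 ∨ a = 7 ∧ 14 ≤ b ∧ b ≤ 15 ∨ a = 8 ∧ 16 ≤ b ∧ b ≤ 19 ∨
      a = 9 ∧ 20 ≤ b ∧ b ≤ 21 ∨ a = 10 ∧ b = 22 ∨ a = 11 ∧ 23 ≤ b ∧ b ≤ 24 ∨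
      a = 12 ∧ 25 ≤ b ∧ b ≤ 27 := by
  simp only [leftovers, Finset.mem_union, Finset.mem_product, Finset.mem_singleton,
    Finset.mem_Icc, or_assoc]

/-- The coefficients of `N` in `leftoverCorner N`. -/
def leftoverSlope : Matrix (Fin 9) (Fin 3) ℤ :=
  !![2, 2, -4; 2, 8, -10; -8, 4, 4; 5, 4, -9; -2, -9, 11; 5, -12, 7; -12, 8, 4; 4, -12, 8;
    4, 7, -11]

/-- The constant terms of `leftoverCorner N`, themselves an integer Heffter array. -/
def leftoverOffset : Matrix (Fin 9) (Fin 3) ℤ :=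
  !![1, 4, -5; 3, 19, -22; -17, 11, 6; 12, 8, -20; -2, -21, 23; 13, -27, 14; -26, 16, 10;
    7, -25, 18; 9, 15, -24]

/-- The `9 × 3` corner formed by the `27` numbers outside the triples. -/
def leftoverCorner (N : ℤ) : Matrix (Fin 9) (Fin 3) ℤ :=
  N • leftoverSlope + leftoverOffset

theorem leftoverCorner_mem_zeroLineSums (N : ℤ) :
    leftoverCorner N ∈ zeroLineSums (Fin 9) (Fin 3) ℤ :=
  add_mem (Submodule.smul_mem _ N (mem_zeroLineSums.2 (by decide)))
    (mem_zeroLineSums.2 (by decide))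

theorem exists_abs_leftoverCorner_eq {N : ℤ} (hN : 0 ≤ N) {p : ℤ × ℤ} (hp : p ∈ leftovers) :
    ∃ i j, |leftoverCorner N i j| = p.1 * N + p.2 := by
  have hcover : ∀ p ∈ leftovers, 0 ≤ p.1 ∧ 0 ≤ p.2 ∧ ∃ i j,
      ((leftoverSlope i j, leftoverOffset i j) = p ∨
        (leftoverSlope i j, leftoverOffset i j) = -p) := by decide
  obtain ⟨ha, hb, i, j, hij⟩ := hcover p hp
  have hval : 0 ≤ p.1 * N + p.2 := by positivity
  have hentry : leftoverCorner N i j = leftoverSlope i j * N + leftoverOffset i j := by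
    rw [mul_comm]
    rfl
  refine ⟨i, j, (abs_eq hval).2 ?_⟩
  rw [hentry]
  rcases hij with rfl | h
  · exact .inl rfl
  · right
    obtain ⟨hslope, hoffset⟩ : leftoverSlope i j = -p.1 ∧ leftoverOffset i j = -p.2 :=
      Prod.ext_iff.1 h
    rw [hslope, hoffset]
    ring

theorem exists_mem_leftovers_eq {N x : ℤ}
    (hx : 2 * N + 1 ≤ x ∧ x ≤ 2 * N + 4 ∨ 4 * N + 5 ≤ x ∧ x ≤ 4 * N + 11 ∨
      5 * N + 12 ≤ x ∧ x ≤ 5 * N + 13 ∨ 7 * N + 14 ≤ x ∧ x ≤ 7 * N + 15 ∨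
      8 * N + 16 ≤ x ∧ x ≤ 8 * N + 19 ∨ 9 * N + 20 ≤ x ∧ x ≤ 9 * N + 21 ∨ x = 10 * N + 22 ∨
      11 * N + 23 ≤ x ∧ x ≤ 11 * N + 24 ∨ 12 * N + 25 ≤ x ∧ x ≤ 12 * N + 27) :
    ∃ p ∈ leftovers, p.1 * N + p.2 = x := by
  suffices ∃ a, (a, x - a * N) ∈ leftovers by
    obtain ⟨a, ha⟩ := this
    exact ⟨_, ha, add_sub_cancel _ _⟩
  rcases hx with hx | hx | hx | hx | hx | hx | hx | hx | hx
  · exact ⟨2, mem_leftovers.2 (by omega)⟩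
  · exact ⟨4, mem_leftovers.2 (by omega)⟩
  · exact ⟨5, mem_leftovers.2 (by omega)⟩
  · exact ⟨7, mem_leftovers.2 (by omega)⟩
  · exact ⟨8, mem_leftovers.2 (by omega)⟩
  · exact ⟨9, mem_leftovers.2 (by omega)⟩
  · exact ⟨10, mem_leftovers.2 (by omega)⟩
  · exact ⟨11, mem_leftovers.2 (by omega)⟩
  · exact ⟨12, mem_leftovers.2 (by omega)⟩

theorem isTripleMember_or_leftover {N x : ℤ} (hx₁ : 1 ≤ x) (hx : x ≤ 12 * N + 27) :
    IsTripleMember N x ∨ ∃ p ∈ leftovers, p.1 * N + p.2 = x := by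
  by_contra h
  obtain ⟨hmem, hleft⟩ := not_or.1 h
  have hs := mt isTripleMember_of_mem_s hmem
  have hp := mt isTripleMember_of_mem_p hmem
  have hq := mt isTripleMember_of_mem_q hmem
  have hl := mt exists_mem_leftovers_eq hleft
  omega

end Leftovers

section Assembly

variable {k : ℕ}

/-- The index type of the `4 * k + 1` arrays. The array `none` gets the leftover corner, the array
`some (κ, g)` a corner made of nine triples of the `g`-th sequence. -/
abbrev ArrayIndex (k : ℕ) : Type :=
  Option (Fin k × Fin 4)

theorem card_arrayIndex : Fintype.card (ArrayIndex k) = 4 * k + 1 := by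
  simp [mul_comm]

/-- The number of triples needed from each sequence: `9 * k` for the corners, and one for each
`3 × 4` block. -/
def tripleCount (k a b : ℕ) : ℤ :=
  9 * k + Fintype.card (ArrayIndex k × (Fin a ⊕ Fin b))

theorem tripleCount_nonneg (k a b : ℕ) : 0 ≤ tripleCount k a b := by
  unfold tripleCount
  positivity

/-- The `9 × 3` corners of the arrays. -/
def corner (N : ℤ) : ArrayIndex k → Matrix (Fin 9) (Fin 3) ℤ
  | none => leftoverCorner N
  | some (κ, g) => tripleCorner (sequenceS N g) (sequenceP N g) (9 * (κ : ℕ))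

theorem corner_mem_zeroLineSums (N : ℤ) (l : ArrayIndex k) :
    corner N l ∈ zeroLineSums (Fin 9) (Fin 3) ℤ := by
  rcases l with _ | ⟨κ, g⟩
  · exact leftoverCorner_mem_zeroLineSums N
  · exact tripleCorner_mem_zeroLineSums _ _ _

/-- The `9 × 4` array with the triples at position `t` in its upper three rows, and the values
`B + 1, …, B + 24` in its lower six rows. -/
def sideBlock (N t B : ℤ) : Matrix (Fin 9) (Fin 4) ℤ :=
  ((tripleBlock N t).fromRows (signedShift B shiftable64)).submatrix
    (finSumFinEquiv (m := 3) (n := 6)).symm (Equiv.refl _)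

theorem sideBlock_mem_zeroLineSums (N t B : ℤ) :
    sideBlock N t B ∈ zeroLineSums (Fin 9) (Fin 4) ℤ :=
  submatrix_mem_zeroLineSums (fromRows_mem_zeroLineSums (tripleBlock_mem_zeroLineSums N t)
    (signedShift_shiftable64_mem_zeroLineSums B)) _ _

theorem sideBlock_inl (N t B : ℤ) (d : Fin 3) (g : Fin 4) :
    sideBlock N t B (finSumFinEquiv (m := 3) (n := 6) (.inl d)) g = tripleBlock N t d g := by
  simp only [sideBlock, Matrix.submatrix_apply, Equiv.symm_apply_apply, Matrix.fromRows_apply_inl,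
    Equiv.refl_apply]

theorem sideBlock_inr (N t B : ℤ) (i : Fin 6) (g : Fin 4) :
    sideBlock N t B (finSumFinEquiv (m := 3) (n := 6) (.inr i)) g =
      signedShift B shiftable64 i g := by
  simp only [sideBlock, Matrix.submatrix_apply, Equiv.symm_apply_apply, Matrix.fromRows_apply_inr,
    Equiv.refl_apply]

/-- The largest value in the corners and the `3 × 4` blocks. -/
def sideStart (k a b : ℕ) : ℤ :=
  12 * tripleCount k a b + 27

/-- The largest value outside the `4 × 4` blocks. -/
def gridStart (k a b : ℕ) : ℤ :=
  sideStart k a b + 24 * Fintype.card (ArrayIndex k × Fin b)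

theorem sideStart_nonneg (k a b : ℕ) : 0 ≤ sideStart k a b := by
  have := tripleCount_nonneg k a b
  unfold sideStart
  positivity

theorem gridStart_nonneg (k a b : ℕ) : 0 ≤ gridStart k a b := by
  have := sideStart_nonneg k a b
  unfold gridStart
  positivity

/-- The arrays of an `IHS(9 + 4 * a, 3 + 4 * b; 4 * k + 1)`. The positions below `9 * k` in the
sequences of triples are used by the corners, the others by the `3 × 4` blocks. -/
noncomputable def heffterArray (k a b : ℕ) (l : ArrayIndex k) :
    Matrix (Fin 9 ⊕ Fin a × Fin 4) (Fin 3 ⊕ Fin b × Fin 4) ℤ :=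
  let N := tripleCount k a b
  let position (u : Fin a ⊕ Fin b) : ℤ := 9 * k + enumIndex (l, u)
  let side (q : Fin b) := sideBlock N (position (.inr q)) (sideStart k a b + 24 * enumIndex (l, q))
  let lower (p : Fin a) := tripleBlock N (position (.inl p))
  let grid (p : Fin a) (q : Fin b) :=
    signedShift (gridStart k a b + 16 * enumIndex (l, p, q)) shiftable44
  ((corner N l).fromCols (rowStrip side)).fromRows
    ((rowStrip lower)ᵀ.fromCols (Matrix.comp _ _ _ _ _ (.of grid)))

variable {a b : ℕ}

theorem heffterArray_mem_zeroLineSums (l : ArrayIndex k) :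
    heffterArray k a b l ∈ zeroLineSums (Fin 9 ⊕ Fin a × Fin 4) (Fin 3 ⊕ Fin b × Fin 4) ℤ :=
  fromRows_mem_zeroLineSums
    (fromCols_mem_zeroLineSums (corner_mem_zeroLineSums _ l)
      (rowStrip_mem_zeroLineSums fun _ => sideBlock_mem_zeroLineSums _ _ _))
    (fromCols_mem_zeroLineSums
      (transpose_mem_zeroLineSums (rowStrip_mem_zeroLineSums fun _ =>
        tripleBlock_mem_zeroLineSums _ _))
      (comp_mem_zeroLineSums fun _ _ => signedShift_shiftable44_mem_zeroLineSums _))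

theorem exists_abs_heffterArray_eq_of_leftover {p : ℤ × ℤ} (hp : p ∈ leftovers) :
    ∃ l i j, |heffterArray k a b l i j| = p.1 * tripleCount k a b + p.2 := by
  obtain ⟨i, j, h⟩ := exists_abs_leftoverCorner_eq (tripleCount_nonneg k a b) hp
  exact ⟨none, .inl i, .inl j, h⟩

theorem exists_abs_heffterArray_eq_of_isTripleMember {x : ℤ}
    (hx : IsTripleMember (tripleCount k a b) x) : ∃ l i j, |heffterArray k a b l i j| = x := by
  obtain ⟨g, d, t, ht₀, ht, rfl⟩ := hx
  rcases lt_or_ge t (9 * k) with hcorner | hblock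
  · lift t to ℕ using ht₀
    obtain ⟨i, j, h⟩ := exists_abs_tripleCorner_eq (sequenceS (tripleCount k a b) g)
      (sequenceP (tripleCount k a b) g) (9 * (t / 9 : ℕ)) (y := (t % 9 : ℕ))
      (Finset.mem_Ico.2 (by omega)) d
    rw [← Nat.cast_ofNat, ← Nat.cast_mul, ← Nat.cast_add, Nat.div_add_mod] at h
    exact ⟨some (⟨t / 9, by omega⟩, g), .inl i, .inl j, h⟩
  · obtain ⟨⟨l, u⟩, hu⟩ : ∃ u : ArrayIndex k × (Fin a ⊕ Fin b), enumIndex u = t - 9 * k :=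
      exists_enumIndex_eq (by linarith) (by unfold tripleCount at ht; linarith)
    obtain rfl : 9 * k + enumIndex (l, u) = t := by rw [hu]; ring
    rw [← abs_tripleBlock_apply]
    rcases u with p | q
    · exact ⟨l, .inr (p, g), .inl d, rfl⟩
    · exact ⟨l, .inl (finSumFinEquiv (m := 3) (n := 6) (.inl d)), .inr (q, g),
        congrArg abs (sideBlock_inl _ _ _ d g)⟩

theorem exists_abs_heffterArray_eq_of_le_gridStart {x : ℤ} (hx₁ : sideStart k a b < x)
    (hx : x ≤ gridStart k a b) : ∃ l i j, |heffterArray k a b l i j| = x := by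
  obtain ⟨⟨l, q⟩, i, j, h⟩ := exists_abs_signedShift_eq exists_abs_shiftable64_eq (by norm_num)
    (sideStart_nonneg k a b) hx₁ hx
  rw [← sideBlock_inr (tripleCount k a b) (9 * k + enumIndex (l, (.inr q : Fin a ⊕ Fin b)))] at h
  exact ⟨l, .inl _, .inr (q, j), h⟩

theorem exists_abs_heffterArray_eq_of_gridStart_lt {x : ℤ} (hx₁ : gridStart k a b < x)
    (hx : x ≤ gridStart k a b + 16 * Fintype.card (ArrayIndex k × Fin a × Fin b)) :
    ∃ l i j, |heffterArray k a b l i j| = x := by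
  obtain ⟨⟨l, p, q⟩, i, j, h⟩ := exists_abs_signedShift_eq exists_abs_shiftable44_eq (by norm_num)
    (gridStart_nonneg k a b) hx₁ hx
  exact ⟨l, .inr (p, i), .inr (q, j), h⟩

theorem gridStart_add_eq :
    gridStart k a b + 16 * Fintype.card (ArrayIndex k × Fin a × Fin b) =
      (9 + 4 * a) * (3 + 4 * b) * (4 * k + 1) := by
  simp only [gridStart, sideStart, tripleCount, Fintype.card_prod, Fintype.card_sum,
    card_arrayIndex, Fintype.card_fin]
  push_cast
  ring

theorem exists_abs_heffterArray_eq {x : ℤ} (hx₁ : 1 ≤ x)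
    (hx : x ≤ (9 + 4 * a) * (3 + 4 * b) * (4 * k + 1)) :
    ∃ l i j, |heffterArray k a b l i j| = x := by
  rcases le_or_gt x (sideStart k a b) with hside | hside
  · rcases isTripleMember_or_leftover hx₁ hside with hmem | ⟨p, hp, rfl⟩
    · exact exists_abs_heffterArray_eq_of_isTripleMember hmem
    · exact exists_abs_heffterArray_eq_of_leftover hp
  rcases le_or_gt x (gridStart k a b) with hgrid | hgrid
  · exact exists_abs_heffterArray_eq_of_le_gridStart hside hgrid
  · exact exists_abs_heffterArray_eq_of_gridStart_lt hgrid (hx.trans_eq gridStart_add_eq.symm)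

end Assembly

theorem exists_IHS_c1_m1_n3_general (m n c : ℕ) (hcmod : c % 4 = 1) (hmmod : m % 4 = 1)
    (hnmod : n % 4 = 3) (hm9 : 9 ≤ m) :
    ∃ A : Fin c → Matrix (Fin m) (Fin n) ℤ, IsIHS m n c A := by
  obtain ⟨k, rfl⟩ : ∃ k, c = 4 * k + 1 := ⟨c / 4, by omega⟩
  obtain ⟨a, rfl⟩ : ∃ a, m = 9 + 4 * a := ⟨(m - 9) / 4, by omega⟩
  obtain ⟨b, rfl⟩ : ∃ b, n = 3 + 4 * b := ⟨(n - 3) / 4, by omega⟩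
  have hrows : Fintype.card (Fin 9 ⊕ Fin a × Fin 4) = 9 + 4 * a := by simp [mul_comm]
  have hcols : Fintype.card (Fin 3 ⊕ Fin b × Fin 4) = 3 + 4 * b := by simp [mul_comm]
  exact exists_isIHS_of_exists_abs_eq hrows hcols card_arrayIndex heffterArray_mem_zeroLineSums
    fun x hx₁ hx => exists_abs_heffterArray_eq hx₁ (mod_cast hx)

theorem exists_IHS_c1_m1_n3
    (m n c : ℕ) (hm : 0 < m) (hn : 0 < n) (hc : 0 < c)
    (hcmod : c % 4 = 1) (hmmod : m % 4 = 1) (hnmod : n % 4 = 3)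
    (hm9 : 9 ≤ m) (hn7 : 7 ≤ n) (hne : ¬(m = 9 ∧ n = 7)) :
    ∃ A : Fin c → Matrix (Fin m) (Fin n) ℤ, IsIHS m n c A :=
  exists_IHS_c1_m1_n3_general m n c hcmod hmmod hnmod hm9
end

section
/- Let m, n, c be positive integers with c ≡ 3 (mod 4) and either m ≡ n ≡ 1 (mod 4) or m ≡ n ≡ 3 (mod 4). If m ≥ 7, n ≥ 7, and (m, n) ≠ (7, 7), then there exists an integer Heffter array set IHS(m, n; c). -/
/-!
Write `c = 2h + 1`. A Kotzig array lists `[-h, h]` three times in such a way that each layer sums to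
zero. Multiplying the entries of a matrix with three rows by `c` and adding the layers of a Kotzig
array gives `c` matrices in which every entry `a` sweeps the window of radius `h` around `c * a`,
while the column sums are only scaled by `c`. Hence the first three rows and the first three columns
of all `c` arrays come from one small design, whose absolute values cover an interval starting at
some `d`, except for a few runs of four consecutive integers. Signs of pairs of columns are chosen
to cancel the imbalance of the `3 × 3` corner.

If `c * d - h ≡ 1 [MOD 4]`, the integers that remain split into runs of four, and
`!![x, -(x + 1); -(x + 2), x + 3]` can be completed to a zero-sum matrix together with other such
runs, whatever their first elements are. So these runs fill the rest of the arrays.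
-/

open Matrix Set

/-! ### Zero-sum matrices and their absolute values -/

/-- A matrix all of whose rows and columns sum to zero. -/
structure IsZeroSum {ι κ : Type*} [Fintype ι] [Fintype κ] (M : Matrix ι κ ℤ) : Prop where
  row_sum : ∀ i, ∑ j, M i j = 0
  col_sum : ∀ j, ∑ i, M i j = 0

/-- The set of absolute values of the entries of an integer matrix. -/
def absValues {ι κ : Type*} (M : Matrix ι κ ℤ) : Set ℕ :=
  {x | ∃ i j, (M i j).natAbs = x}

section ZeroSum

variable {ι κ μ ν γ : Type*} [Fintype ι] [Fintype κ] [Fintype μ] [Fintype ν] [Fintype γ]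

theorem IsZeroSum.transpose {M : Matrix ι κ ℤ} (hM : IsZeroSum M) : IsZeroSum Mᵀ :=
  ⟨hM.col_sum, hM.row_sum⟩

theorem IsZeroSum.submatrix {M : Matrix ι κ ℤ} (hM : IsZeroSum M) (e : μ ≃ ι) (f : ν ≃ κ) :
    IsZeroSum (M.submatrix e f) :=
  ⟨fun i => (f.sum_comp (M (e i))).trans (hM.row_sum _),
    fun j => (e.sum_comp fun i => M i (f j)).trans (hM.col_sum _)⟩

theorem IsZeroSum.fromCols {M : Matrix ι κ ℤ} {M' : Matrix ι μ ℤ} (hM : IsZeroSum M)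
    (hM' : IsZeroSum M') : IsZeroSum (fromCols M M') where
  row_sum i := by simp [hM.row_sum, hM'.row_sum]
  col_sum := by rintro (j | j) <;> simp [hM.col_sum, hM'.col_sum]

theorem isZeroSum_fromBlocks {A : Matrix ι κ ℤ} {B : Matrix ι μ ℤ} {C : Matrix ν κ ℤ}
    {D : Matrix ν μ ℤ} (hrow : ∀ i, ∑ j, A i j + ∑ j, B i j = 0)
    (hcol : ∀ j, ∑ i, A i j + ∑ i, C i j = 0) (hB : ∀ j, ∑ i, B i j = 0)
    (hC : ∀ i, ∑ j, C i j = 0) (hD : IsZeroSum D) : IsZeroSum (fromBlocks A B C D) where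
  row_sum := by rintro (i | i) <;> simp [hrow, hC, hD.row_sum]
  col_sum := by rintro (j | j) <;> simp [hcol, hB, hD.col_sum]

theorem isZeroSum_of_prod {M : γ → Matrix ι κ ℤ} (hM : ∀ t, IsZeroSum (M t)) :
    IsZeroSum (of fun i (p : γ × κ) => M p.1 i p.2) where
  row_sum i := by simp [Fintype.sum_prod_type, (hM _).row_sum]
  col_sum p := (hM p.1).col_sum p.2

end ZeroSum

section AbsValues

variable {ι κ μ ν γ : Type*}

theorem natAbs_mem_absValues (M : Matrix ι κ ℤ) (i : ι) (j : κ) :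
    (M i j).natAbs ∈ absValues M :=
  ⟨i, j, rfl⟩

theorem Ico_subset_absValues {M : Matrix ι κ ℤ} {a N : ℕ} {row : Fin N → ι} {col : Fin N → κ}
    (h : ∀ e, (M (row e) (col e)).natAbs = a + e) : Ico a (a + N) ⊆ absValues M := by
  intro x hx
  have hlt : x - a < N := Nat.sub_lt_left_of_lt_add hx.1 hx.2
  exact ⟨_, _, (h ⟨x - a, hlt⟩).trans (Nat.add_sub_of_le hx.1)⟩

theorem absValues_transpose (M : Matrix ι κ ℤ) : absValues Mᵀ = absValues M :=
  Set.ext fun _ => exists_comm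

theorem absValues_submatrix (M : Matrix ι κ ℤ) (e : μ ≃ ι) (f : ν ≃ κ) :
    absValues (M.submatrix e f) = absValues M := by
  ext x
  simp only [absValues, mem_ofPred_eq, submatrix_apply, e.surjective.exists, f.surjective.exists]

theorem absValues_fromCols (M : Matrix ι κ ℤ) (M' : Matrix ι μ ℤ) :
    absValues (fromCols M M') = absValues M ∪ absValues M' := by
  ext x
  simp only [absValues, mem_ofPred_eq, mem_union, Sum.exists, fromCols_apply_inl,
    fromCols_apply_inr, exists_or]

theorem absValues_fromBlocks (A : Matrix ι κ ℤ) (B : Matrix ι μ ℤ) (C : Matrix ν κ ℤ)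
    (D : Matrix ν μ ℤ) : absValues (fromBlocks A B C D) =
      absValues A ∪ absValues B ∪ (absValues C ∪ absValues D) := by
  ext x
  simp only [absValues, mem_ofPred_eq, mem_union, Sum.exists, fromBlocks_apply₁₁,
    fromBlocks_apply₁₂, fromBlocks_apply₂₁, fromBlocks_apply₂₂, exists_or]
  exact or_or_or_comm

theorem absValues_subset_absValues_of_prod (M : γ → Matrix ι κ ℤ) (t : γ) :
    absValues (M t) ⊆ absValues (of fun i (p : γ × κ) => M p.1 i p.2) := by
  rintro _ ⟨i, j, rfl⟩
  exact ⟨i, (t, j), rfl⟩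

end AbsValues

/-! ### Counting -/

/-- A family of `c` arrays with `mnc` entries attains `mnc` distinct absolute values only if no
absolute value is repeated. -/
theorem exists_isIHS_of_covers {ι κ : Type*} [Fintype ι] [Fintype κ] {m n c : ℕ}
    (hι : Fintype.card ι = m) (hκ : Fintype.card κ = n) {A : Fin c → Matrix ι κ ℤ}
    (hA : ∀ l, IsZeroSum (A l)) (hcov : ∀ x ∈ Icc 1 (m * n * c), ∃ l, x ∈ absValues (A l)) :
    ∃ A' : Fin c → Matrix (Fin m) (Fin n) ℤ, IsIHS m n c A' := by
  let e := (Fintype.equivFinOfCardEq hι).symm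
  let f := (Fintype.equivFinOfCardEq hκ).symm
  let value : Fin c × Fin m × Fin n → ℕ := fun p => (A p.1 (e p.2.1) (f p.2.2)).natAbs
  have hsub : Finset.Icc 1 (m * n * c) ⊆ Finset.univ.image value := by
    intro x hx
    obtain ⟨l, i, j, rfl⟩ := hcov x (Finset.mem_Icc.mp hx)
    exact Finset.mem_image.mpr ⟨(l, e.symm i, f.symm j), Finset.mem_univ _, by simp [value]⟩
  have hcard : (Finset.univ : Finset (Fin c × Fin m × Fin n)).card = m * n * c := by
    simp; ring
  have himage : Finset.Icc 1 (m * n * c) = Finset.univ.image value :=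
    Finset.eq_of_subset_of_card_le hsub (Finset.card_image_le.trans (by simp [hcard]))
  have hmem (x : ℕ) : (1 ≤ x ∧ x ≤ m * n * c) ↔ ∃ l i j, value (l, i, j) = x := by
    rw [← Finset.mem_Icc, himage]
    simp
  have hinj : Function.Injective value := by
    rw [← injOn_univ, ← Finset.coe_univ]
    exact Finset.injOn_of_card_image_eq (by rw [← himage, hcard, Nat.card_Icc, Nat.add_sub_cancel])
  refine ⟨fun l => (A l).submatrix e f, fun p q hpq => hinj ?_, fun x => ⟨fun hx => ?_, ?_⟩,
    fun l => ((hA l).submatrix e f).row_sum, fun l => ((hA l).submatrix e f).col_sum⟩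
  · simp only [Int.abs_eq_natAbs, Nat.cast_inj] at hpq
    exact hpq
  · lift x to ℕ using by omega
    obtain ⟨l, i, j, rfl⟩ := (hmem x).mp (by exact_mod_cast hx)
    exact ⟨l, i, j, Int.abs_eq_natAbs _⟩
  · rintro ⟨l, i, j, rfl⟩
    rw [Int.abs_eq_natAbs]
    exact_mod_cast (hmem _).mpr ⟨l, i, j, rfl⟩

/-! ### Zero-sum matrices containing prescribed runs -/

/-- There is a zero-sum `ι × κ` matrix whose absolute values include runs of four and of eight
consecutive integers with arbitrarily prescribed first elements, one run of length four for each
element of `ρ` and one of length eight for each element of `σ`. -/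
def AbsorbsRuns (ι κ ρ σ : Type*) [Fintype ι] [Fintype κ] : Prop :=
  ∀ (a : ρ → ℕ) (b : σ → ℕ), ∃ M : Matrix ι κ ℤ, IsZeroSum M ∧
    (∀ k, Ico (a k) (a k + 4) ⊆ absValues M) ∧ ∀ k, Ico (b k) (b k + 8) ⊆ absValues M

namespace AbsorbsRuns

variable {ι κ κ' ρ ρ' σ σ' : Type*} [Fintype ι] [Fintype κ] [Fintype κ']

theorem transpose (h : AbsorbsRuns ι κ ρ σ) : AbsorbsRuns κ ι ρ σ := by
  intro a b
  obtain ⟨M, hM, ha, hb⟩ := h a b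
  refine ⟨Mᵀ, hM.transpose, ?_⟩
  rw [absValues_transpose]
  exact ⟨ha, hb⟩

theorem of_card_eq {ι' : Type*} [Fintype ι'] [Fintype ρ] [Fintype ρ'] [Fintype σ] [Fintype σ']
    (h : AbsorbsRuns ι κ ρ σ) (hι : Fintype.card ι' = Fintype.card ι)
    (hκ : Fintype.card κ' = Fintype.card κ) (hρ : Fintype.card ρ' = Fintype.card ρ)
    (hσ : Fintype.card σ' = Fintype.card σ) : AbsorbsRuns ι' κ' ρ' σ' := by
  intro a b
  let e := Fintype.equivOfCardEq hρ
  let f := Fintype.equivOfCardEq hσ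
  obtain ⟨M, hM, ha, hb⟩ := h (a ∘ e.symm) (b ∘ f.symm)
  refine ⟨M.submatrix (Fintype.equivOfCardEq hι) (Fintype.equivOfCardEq hκ), hM.submatrix _ _, ?_⟩
  rw [absValues_submatrix]
  exact ⟨fun k => by simpa using ha (e k), fun k => by simpa using hb (f k)⟩

theorem append (h : AbsorbsRuns ι κ ρ σ) (h' : AbsorbsRuns ι κ' ρ' σ') :
    AbsorbsRuns ι (κ ⊕ κ') (ρ ⊕ ρ') (σ ⊕ σ') := by
  intro a b
  obtain ⟨M, hM, ha, hb⟩ := h (a ∘ Sum.inl) (b ∘ Sum.inl)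
  obtain ⟨M', hM', ha', hb'⟩ := h' (a ∘ Sum.inr) (b ∘ Sum.inr)
  refine ⟨fromCols M M', hM.fromCols hM', ?_⟩
  rw [absValues_fromCols]
  exact ⟨Sum.rec (fun k => subset_union_of_subset_left (ha k) _)
      fun k => subset_union_of_subset_right (ha' k) _,
    Sum.rec (fun k => subset_union_of_subset_left (hb k) _)
      fun k => subset_union_of_subset_right (hb' k) _⟩

theorem prod (h : AbsorbsRuns ι κ ρ σ) (γ : Type*) [Fintype γ] :
    AbsorbsRuns ι (γ × κ) (γ × ρ) (γ × σ) := by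
  intro a b
  choose M hM ha hb using fun t => h (fun k => a (t, k)) (fun k => b (t, k))
  exact ⟨_, isZeroSum_of_prod hM,
    fun k => (ha k.1 k.2).trans (absValues_subset_absValues_of_prod M k.1),
    fun k => (hb k.1 k.2).trans (absValues_subset_absValues_of_prod M k.1)⟩

theorem merge (h : AbsorbsRuns ι κ (ρ ⊕ σ × Fin 2) σ') : AbsorbsRuns ι κ ρ (σ ⊕ σ') := by
  intro a b
  obtain ⟨M, hM, ha, hb⟩ :=
    h (Sum.elim a fun p => b (.inl p.1) + 4 * p.2) (b ∘ Sum.inr)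
  refine ⟨M, hM, fun k => ha (.inl k), Sum.rec (fun k x hx => ?_) hb⟩
  have hfst := @ha (.inr (k, 0)) x
  have hsnd := @ha (.inr (k, 1)) x
  simp only [Sum.elim_inr, mem_Ico, Fin.val_zero, Fin.val_one] at hfst hsnd hx
  by_cases hlt : x < b (.inl k) + 4
  · exact hfst (by omega)
  · exact hsnd (by omega)

end AbsorbsRuns

theorem absorbsRuns_four_four : AbsorbsRuns (Fin 4) (Fin 4) (Fin 4) Empty := by
  intro a _
  let M : Matrix (Fin 4) (Fin 4) ℤ :=
    !![a 0, -(a 0 + 1), -a 1, a 1 + 1;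
      -(a 0 + 2), a 0 + 3, a 1 + 2, -(a 1 + 3);
      -a 2, a 2 + 1, a 3, -(a 3 + 1);
      a 2 + 2, -(a 2 + 3), -(a 3 + 2), a 3 + 3]
  let row : Fin 4 → Fin 4 → Fin 4 :=
    ![![0, 0, 1, 1], ![0, 0, 1, 1], ![2, 2, 3, 3], ![2, 2, 3, 3]]
  let col : Fin 4 → Fin 4 → Fin 4 :=
    ![![0, 1, 0, 1], ![2, 3, 2, 3], ![0, 1, 0, 1], ![2, 3, 2, 3]]
  refine ⟨M, ⟨fun i => ?_, fun j => ?_⟩,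
    fun k => Ico_subset_absValues (row := row k) (col := col k) fun e => ?_, nofun⟩
  · fin_cases i <;> simp [M, Fin.sum_univ_four] <;> ring
  · fin_cases j <;> simp [M, Fin.sum_univ_four] <;> ring
  · fin_cases k <;> fin_cases e <;> simp [M, row, col] <;> omega

theorem absorbsRuns_four_six : AbsorbsRuns (Fin 4) (Fin 6) (Fin 6) Empty := by
  intro a _
  let M : Matrix (Fin 4) (Fin 6) ℤ :=
    !![a 0, -(a 0 + 1), a 1, -(a 1 + 1), -a 2, a 2 + 2;
      -(a 0 + 2), a 0 + 3, -(a 1 + 2), a 1 + 3, a 2 + 1, -(a 2 + 3);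
      -a 3, a 3 + 1, -a 4, a 4 + 1, a 5, -(a 5 + 2);
      a 3 + 2, -(a 3 + 3), a 4 + 2, -(a 4 + 3), -(a 5 + 1), a 5 + 3]
  let row : Fin 6 → Fin 4 → Fin 4 :=
    ![![0, 0, 1, 1], ![0, 0, 1, 1], ![0, 1, 0, 1], ![2, 2, 3, 3], ![2, 2, 3, 3], ![2, 3, 2, 3]]
  let col : Fin 6 → Fin 4 → Fin 6 :=
    ![![0, 1, 0, 1], ![2, 3, 2, 3], ![4, 4, 5, 5], ![0, 1, 0, 1], ![2, 3, 2, 3], ![4, 4, 5, 5]]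
  refine ⟨M, ⟨fun i => ?_, fun j => ?_⟩,
    fun k => Ico_subset_absValues (row := row k) (col := col k) fun e => ?_, nofun⟩
  · fin_cases i <;> simp [M, Fin.sum_univ_six] <;> ring
  · fin_cases j <;> simp [M, Fin.sum_univ_four] <;> ring
  · fin_cases k <;> fin_cases e <;> simp [M, row, col] <;> omega

theorem absorbsRuns_six_six : AbsorbsRuns (Fin 6) (Fin 6) (Fin 7) Unit := by
  intro a b
  let M : Matrix (Fin 6) (Fin 6) ℤ :=
    !![-(a 5 + 1), -(b () + 6), -a 3, a 3 + 2, a 5, b () + 5;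
      a 5 + 2, -a 1, a 1 + 2, -(a 6 + 2), -(a 5 + 3), a 6 + 1;
      a 4 + 1, a 1 + 1, -(a 1 + 3), -(a 4 + 2), a 0 + 3, -a 0;
      b () + 1, -(b () + 2), a 3 + 3, -(a 3 + 1), -(a 0 + 2), a 0 + 1;
      -a 4, b (), -(a 2 + 2), a 4 + 3, a 2 + 3, -(b () + 4);
      -(b () + 3), b () + 7, a 2, a 6, -(a 2 + 1), -(a 6 + 3)]
  let row : Fin 7 → Fin 4 → Fin 6 :=
    ![![2, 3, 3, 2], ![1, 2, 1, 2], ![5, 5, 4, 4], ![0, 3, 0, 3], ![4, 2, 2, 4], ![0, 0, 1, 1],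
      ![5, 1, 1, 5]]
  let col : Fin 7 → Fin 4 → Fin 6 :=
    ![![5, 5, 4, 4], ![1, 1, 2, 2], ![2, 4, 2, 4], ![2, 3, 3, 2], ![0, 0, 3, 3], ![4, 0, 0, 4],
      ![3, 5, 3, 5]]
  let row' : Fin 8 → Fin 6 := ![4, 3, 3, 5, 4, 0, 0, 5]
  let col' : Fin 8 → Fin 6 := ![1, 0, 1, 0, 5, 5, 1, 1]
  refine ⟨M, ⟨fun i => ?_, fun j => ?_⟩,
    fun k => Ico_subset_absValues (row := row k) (col := col k) fun e => ?_,
    fun () => Ico_subset_absValues (row := row') (col := col') fun e => ?_⟩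
  · fin_cases i <;> simp [M, Fin.sum_univ_six] <;> ring
  · fin_cases j <;> simp [M, Fin.sum_univ_six] <;> ring
  · fin_cases k <;> fin_cases e <;> simp [M, row, col] <;> omega
  · fin_cases e <;> simp [M, row', col'] <;> omega

theorem absorbsRuns_of_card {ι κ ρ : Type*} [Fintype ι] [Fintype κ] [Fintype ρ] {s t : ℕ}
    (hs : 2 ≤ s) (ht : 2 ≤ t) (hst : s % 2 = t % 2) (hι : Fintype.card ι = 2 * s)
    (hκ : Fintype.card κ = 2 * t) (hρ : Fintype.card ρ + 2 = s * t) :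
    AbsorbsRuns ι κ ρ Unit := by
  obtain hs2 | hs2 := Nat.mod_two_eq_zero_or_one s
  · obtain ⟨p, rfl⟩ : ∃ p, s = 2 * p := ⟨s / 2, by omega⟩
    obtain ⟨q, rfl⟩ : ∃ q, t = 2 * q := ⟨t / 2, by omega⟩
    have htiles := ((absorbsRuns_four_four.prod (Fin q)).transpose.prod (Fin p)).transpose
    have hruns : AbsorbsRuns (Fin p × Fin 4) (Fin q × Fin 4) (ρ ⊕ Unit × Fin 2) Empty :=
      htiles.of_card_eq rfl rfl (by simp; linarith) (by simp)
    exact hruns.merge.of_card_eq (by simp; omega) (by simp; omega) rfl (by simp)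
  · obtain ⟨p, rfl⟩ : ∃ p, s = 2 * p + 3 := ⟨(s - 3) / 2, by omega⟩
    obtain ⟨q, rfl⟩ : ∃ q, t = 2 * q + 3 := ⟨(t - 3) / 2, by omega⟩
    have htop := absorbsRuns_six_six.append (absorbsRuns_four_six.transpose.prod (Fin q))
    have hband := absorbsRuns_four_six.append (absorbsRuns_four_four.prod (Fin q))
    have htiles := (htop.transpose.append (hband.transpose.prod (Fin p))).transpose
    exact htiles.of_card_eq (by simp; omega) (by simp; omega) (by simp; linarith) (by simp)

/-! ### Covering by runs of length four -/

/-- `S` is contained in a union of `N` runs of four consecutive natural numbers. -/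
def CoveredByRuns (N : ℕ) (S : Set ℕ) : Prop :=
  ∃ g : Fin N → ℕ, S ⊆ ⋃ i, Ico (g i) (g i + 4)

namespace CoveredByRuns

variable {N N' : ℕ} {S S' : Set ℕ}

theorem mono (h : CoveredByRuns N S) (hS : S' ⊆ S) : CoveredByRuns N S' :=
  h.imp fun _ => hS.trans

theorem union (h : CoveredByRuns N S) (h' : CoveredByRuns N' S') :
    CoveredByRuns (N + N') (S ∪ S') := by
  obtain ⟨g, hg⟩ := h
  obtain ⟨g', hg'⟩ := h'
  refine ⟨Fin.append g g', union_subset (fun x hx => ?_) fun x hx => ?_⟩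
  · obtain ⟨i, hi⟩ := mem_iUnion.mp (hg hx)
    exact mem_iUnion.mpr ⟨i.castAdd N', by simpa using hi⟩
  · obtain ⟨i, hi⟩ := mem_iUnion.mp (hg' hx)
    exact mem_iUnion.mpr ⟨i.natAdd N, by simpa using hi⟩

theorem iUnion {S : Fin N → Set ℕ} (h : ∀ i, CoveredByRuns N' (S i)) :
    CoveredByRuns (N * N') (⋃ i, S i) := by
  choose g hg using h
  refine ⟨fun p => g (finProdFinEquiv.symm p).1 (finProdFinEquiv.symm p).2,
    iUnion_subset fun i x hx => ?_⟩
  obtain ⟨k, hk⟩ := mem_iUnion.mp (hg i hx)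
  exact mem_iUnion.mpr ⟨finProdFinEquiv (i, k), by simpa using hk⟩

end CoveredByRuns

theorem coveredByRuns_Ico (a N : ℕ) : CoveredByRuns N (Ico a (a + 4 * N)) := by
  refine ⟨fun i => a + 4 * i, fun x hx => mem_iUnion.mpr ?_⟩
  rw [mem_Ico] at hx
  exact ⟨⟨(x - a) / 4, by omega⟩, by simp only [mem_Ico]; omega⟩

/-- The `q` for which `x` lies in the window of radius `h` around `(2h + 1)q`. -/
def windowIndex (h x : ℕ) : ℕ := (x + h) / (2 * h + 1)

theorem CoveredByRuns.windowIndex_preimage {N : ℕ} {S : Set ℕ} (hS : CoveredByRuns N S) (h : ℕ) :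
    CoveredByRuns (N * (2 * h + 1)) (windowIndex h ⁻¹' S) := by
  obtain ⟨g, hg⟩ := hS
  have hrun (i : Fin N) :
      CoveredByRuns (2 * h + 1) (windowIndex h ⁻¹' Ico (g i) (g i + 4)) := by
    refine (coveredByRuns_Ico ((2 * h + 1) * g i - h) _).mono fun x hx => ?_
    rw [mem_preimage, mem_Ico, windowIndex, Nat.le_div_iff_mul_le (by omega),
      Nat.div_lt_iff_lt_mul (by omega)] at hx
    constructor <;> lia
  refine (iUnion hrun).mono ?_
  rw [← preimage_iUnion]
  exact preimage_mono hg

theorem coveredByRuns_windowIndex_notMem_Ico {h d k b N P : ℕ}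
    (hd : (2 * h + 1) * d = 4 * k + h + 1) (hP : d + 4 * N ≤ 4 * P) :
    CoveredByRuns ((2 * h + 1) * (P - N))
      {x | x ∈ Icc 1 ((2 * h + 1) * (b + 4 * P)) ∧ windowIndex h x ∉ Ico d (d + b + 4 * N)} := by
  obtain ⟨R, rfl⟩ : ∃ R, P = N + R := ⟨P - N, by omega⟩
  have hk : k ≤ (2 * h + 1) * R := by nlinarith
  have hlow := coveredByRuns_Ico 1 k
  have hhigh := coveredByRuns_Ico ((2 * h + 1) * (d + b + 4 * N) - h) ((2 * h + 1) * R - k)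
  rw [Nat.add_sub_cancel_left, ← Nat.add_sub_of_le hk]
  refine (hlow.union hhigh).mono ?_
  rintro x ⟨⟨hx1, hx⟩, hout⟩
  rw [mem_Ico, not_and_or, not_le, not_lt, windowIndex, Nat.div_lt_iff_lt_mul (by omega),
    Nat.le_div_iff_mul_le (by omega)] at hout
  refine hout.imp (fun hlt => ⟨hx1, by lia⟩) fun hle => ⟨by lia, ?_⟩
  zify [hk, show h ≤ (2 * h + 1) * (d + b + 4 * N) by nlinarith] at *
  linarith

theorem AbsorbsRuns.exists_family {ι κ : Type*} [Fintype ι] [Fintype κ] {N c : ℕ} {S : Set ℕ}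
    (h : AbsorbsRuns ι κ (Fin N) Unit) (hS : CoveredByRuns (c * N) S) (w : ℕ) :
    ∃ Q : Fin c → Matrix ι κ ℤ, (∀ l, IsZeroSum (Q l)) ∧
      ∀ x ∈ S ∪ Ico w (w + 8 * c), ∃ l, x ∈ absValues (Q l) := by
  obtain ⟨g, hg⟩ := hS
  choose Q hQ hfour height using fun l : Fin c =>
    h (fun k => g (finProdFinEquiv (l, k))) fun _ => w + 8 * l
  refine ⟨Q, hQ, ?_⟩
  rintro x (hx | ⟨hwx, hxw⟩)
  · obtain ⟨p, hp⟩ := mem_iUnion.mp (hg hx)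
    obtain ⟨⟨l, k⟩, rfl⟩ := finProdFinEquiv.surjective p
    exact ⟨l, hfour l k hp⟩
  · exact ⟨⟨(x - w) / 8, by omega⟩, height _ () ⟨by dsimp only; omega, by dsimp only; omega⟩⟩

/-! ### Lifting along Kotzig arrays -/

/-- A Kotzig array: each `κ i` takes every value in `[-h, h]`, and `∑ i, κ i l = 0` for all `l`.
Adding `κ i l` to a multiple of `2h + 1` fills the window around that multiple as `l` varies. -/
structure IsKotzig {ι Λ : Type*} [Fintype ι] (h : ℕ) (κ : ι → Λ → ℤ) : Prop where
  sum_eq_zero : ∀ l, ∑ i, κ i l = 0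
  exists_eq : ∀ i (r : ℤ), r.natAbs ≤ h → ∃ l, κ i l = r

namespace IsKotzig

variable {ι Λ : Type*} [Fintype ι] {h : ℕ} {κ : ι → Λ → ℤ}

theorem neg (hκ : IsKotzig h κ) : IsKotzig h (-κ) where
  sum_eq_zero l := by simp [hκ.sum_eq_zero]
  exists_eq i r hr := by
    obtain ⟨l, hl⟩ := hκ.exists_eq i (-r) (by rwa [Int.natAbs_neg])
    exact ⟨l, by simp [hl]⟩

theorem exists_natAbs_eq (hκ : IsKotzig h κ) (i : ι) {a : ℤ} {x : ℕ}
    (ha : a.natAbs = windowIndex h x) : ∃ l, ((2 * h + 1) * a + κ i l).natAbs = x := by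
  have hdiv := Nat.div_add_mod (x + h) (2 * h + 1)
  have hmod : (x + h) % (2 * h + 1) < 2 * h + 1 := Nat.mod_lt _ (by omega)
  rw [windowIndex] at ha
  rw [← ha] at hdiv
  zify at hdiv
  obtain hpos | hneg := le_total 0 a
  · rw [abs_of_nonneg hpos] at hdiv
    obtain ⟨l, hl⟩ := hκ.exists_eq i (x - (2 * h + 1) * a) (by lia)
    exact ⟨l, by rw [hl]; omega⟩
  · rw [abs_of_nonpos hneg] at hdiv
    obtain ⟨l, hl⟩ := hκ.exists_eq i (-x - (2 * h + 1) * a) (by lia)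
    exact ⟨l, by rw [hl]; omega⟩

end IsKotzig

theorem exists_isKotzig_three (h : ℕ) :
    ∃ κ : Fin 3 → Fin (2 * h + 1) → ℤ, IsKotzig h κ := by
  let center : Fin (2 * h + 1) → ℤ := fun l => l - h
  have hcenter (t : ℤ) (ht : t.natAbs ≤ h) : ∃ l, center l = t :=
    ⟨⟨(t + h).toNat, by omega⟩, by simp only [center]; omega⟩
  let κ : Fin 3 → ℤ → ℤ :=
    ![id, fun t => if t ≤ 0 then -2 * t - h else -2 * t + h + 1,
      fun t => if t ≤ 0 then t + h else t - h - 1]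
  refine ⟨fun i l => κ i (center l), fun l => ?_, fun i r hr => ?_⟩
  · simp only [κ, Fin.sum_univ_three, cons_val]
    split_ifs <;> simp <;> ring
  · suffices ∃ t : ℤ, t.natAbs ≤ h ∧ κ i t = r by
      obtain ⟨t, ht, rfl⟩ := this
      exact (hcenter t ht).imp fun l hl => congrArg (κ i) hl
    match i with
    | 0 => exact ⟨r, hr, rfl⟩
    | 1 =>
      refine ⟨if (r + h) % 2 = 0 then -((r + h) / 2) else (h + 1 - r) / 2, ?_, ?_⟩
      · grind
      · simp only [κ, cons_val]
        grind
    | 2 =>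
      refine ⟨if 0 ≤ r then r - h else r + h + 1, ?_, ?_⟩
      · grind
      · simp only [κ, cons_val]
        grind

theorem exists_units_sum_eq {τ : Type*} [Fintype τ] {a : ℤ} (ha : a.natAbs ≤ Fintype.card τ)
    (hpar : a % 2 = Fintype.card τ % 2) : ∃ ε : τ → ℤˣ, ∑ t, (ε t : ℤ) = a := by
  classical
  obtain ⟨s, -, hs⟩ := Finset.exists_subset_card_eq
    (show ((a + Fintype.card τ) / 2).toNat ≤ (Finset.univ : Finset τ).card by
      rw [Finset.card_univ]; omega)
  refine ⟨fun t => if t ∈ s then 1 else -1, ?_⟩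
  have hcompl := s.card_add_card_compl
  simp only [apply_ite Units.val, Units.val_one, Units.val_neg, Finset.sum_ite, Finset.sum_const,
    Finset.filter_mem_eq_inter, Finset.univ_inter, ← Finset.compl_filter, nsmul_eq_mul]
  omega

section Lift

variable {ι τ Λ : Type*} {h : ℕ} {κ : ι → Λ → ℤ}

/-- The square matrix `C` scaled by `2h + 1`, plus the layer `l` of the Kotzig array `κ` arranged
as a Latin square. -/
def liftCorner [AddCommGroup ι] (h : ℕ) (κ : ι → Λ → ℤ) (C : Matrix ι ι ℤ) (l : Λ) :
    Matrix ι ι ℤ :=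
  of fun i j => (2 * h + 1) * C i j + κ (i + j) l

/-- Each pair of columns of `L` and `R` scaled by `2h + 1`, with the layer `l` of the Kotzig array
`κ` added on the left and subtracted on the right, and multiplied by a sign. -/
def liftStrip (h : ℕ) (κ : ι → Λ → ℤ) (ε : τ → ℤˣ) (L R : Matrix ι τ ℤ) (l : Λ) :
    Matrix ι (τ ⊕ τ) ℤ :=
  fromCols (of fun i t => ε t * ((2 * h + 1) * L i t + κ i l))
    (of fun i t => ε t * ((2 * h + 1) * R i t + (-κ) i l))

theorem transpose_liftCorner [AddCommGroup ι] (C : Matrix ι ι ℤ) (l : Λ) :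
    (liftCorner h κ C l)ᵀ = liftCorner h κ Cᵀ l := by
  ext i j
  simp [liftCorner, add_comm]

theorem sum_liftStrip_row [Fintype τ] {ε : τ → ℤˣ} {L R : Matrix ι τ ℤ} {w : ι → ℤ}
    (hLR : ∀ i t, L i t + R i t = w i) (l : Λ) (i : ι) :
    ∑ t, liftStrip h κ ε L R l i t = (2 * h + 1) * ((∑ t, (ε t : ℤ)) * w i) := by
  simp only [liftStrip, Fintype.sum_sum_type, fromCols_apply_inl, fromCols_apply_inr, of_apply,
    ← Finset.sum_add_distrib, Finset.sum_mul, Finset.mul_sum, Pi.neg_apply]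
  exact Finset.sum_congr rfl fun t _ => by rw [← hLR i t]; ring

variable [Fintype ι]

theorem sum_liftCorner [AddCommGroup ι] (hκ : IsKotzig h κ) (C : Matrix ι ι ℤ) (l : Λ) (i : ι) :
    ∑ j, liftCorner h κ C l i j = (2 * h + 1) * ∑ j, C i j := by
  have hshift : ∑ j, κ (i + j) l = 0 :=
    (Equiv.sum_comp (Equiv.addLeft i) fun j => κ j l).trans (hκ.sum_eq_zero l)
  simp [liftCorner, Finset.sum_add_distrib, ← Finset.mul_sum, hshift]

theorem sum_liftStrip_col (hκ : IsKotzig h κ) {ε : τ → ℤˣ} {L R : Matrix ι τ ℤ}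
    (hL : ∀ t, ∑ i, L i t = 0) (hR : ∀ t, ∑ i, R i t = 0) (l : Λ) (t : τ ⊕ τ) :
    ∑ i, liftStrip h κ ε L R l i t = 0 := by
  rcases t with t | t <;>
    simp [liftStrip, ← Finset.mul_sum, Finset.sum_add_distrib, hL, hR, hκ.sum_eq_zero]

theorem exists_mem_absValues_liftCorner [AddCommGroup ι] (hκ : IsKotzig h κ) {C : Matrix ι ι ℤ}
    {x : ℕ} (hx : windowIndex h x ∈ absValues C) : ∃ l, x ∈ absValues (liftCorner h κ C l) := by
  obtain ⟨i, j, hij⟩ := hx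
  obtain ⟨l, rfl⟩ := hκ.exists_natAbs_eq (i + j) hij
  exact ⟨l, natAbs_mem_absValues _ i j⟩

theorem exists_mem_absValues_liftStrip (hκ : IsKotzig h κ) {ε : τ → ℤˣ} {L R : Matrix ι τ ℤ}
    {x : ℕ} (hx : windowIndex h x ∈ absValues L ∪ absValues R) :
    ∃ l, x ∈ absValues (liftStrip h κ ε L R l) := by
  obtain ⟨i, t, hit⟩ | ⟨i, t, hit⟩ := hx
  · obtain ⟨l, rfl⟩ := hκ.exists_natAbs_eq i hit
    exact ⟨l, i, .inl t, by simp [liftStrip, Int.natAbs_mul]⟩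
  · obtain ⟨l, rfl⟩ := hκ.neg.exists_natAbs_eq i hit
    exact ⟨l, i, .inr t, by simp [liftStrip, Int.natAbs_mul]⟩

end Lift

/-! ### From coarse designs to Heffter array sets -/

/-- The common row and column profile of the corner and of the pairs of columns of a coarse
design. -/
def weight : Fin 3 → ℤ := ![1, 1, -2]

/-- The first three rows and columns of an array, up to the factor `c` and a Kotzig array: a `3 × 3`
corner `C` and pairs `(L t, R t)` of columns of length three. Their absolute values, together with
`N` runs of length four, cover an interval that starts at `d` and is long enough for them to be
disjoint. The integers `α` and `β` measure the imbalance of the rows and columns of the corner. -/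
structure IsCoarseDesign {τ : Type*} [Fintype τ] (d N : ℕ) (α β : ℤ)
    (C : Matrix (Fin 3) (Fin 3) ℤ) (L R : Matrix (Fin 3) τ ℤ) : Prop where
  left_sum : ∀ t, ∑ i, L i t = 0
  right_sum : ∀ t, ∑ i, R i t = 0
  left_add_right : ∀ i t, L i t + R i t = weight i
  corner_row_sum : ∀ i, ∑ j, C i j = α * weight i
  corner_col_sum : ∀ j, ∑ i, C i j = β * weight j
  gaps : CoveredByRuns N (Ico d (d + (6 * Fintype.card τ + 9) + 4 * N) \
    (absValues C ∪ (absValues L ∪ absValues R)))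

section Assembly

variable {τ₁ τ₂ Λ : Type*}

theorem IsCoarseDesign.submatrix {τ τ' : Type*} [Fintype τ] [Fintype τ'] {d N : ℕ} {α β : ℤ}
    {C : Matrix (Fin 3) (Fin 3) ℤ} {L R : Matrix (Fin 3) τ ℤ} (D : IsCoarseDesign d N α β C L R)
    (e : τ' ≃ τ) : IsCoarseDesign d N α β C (L.submatrix id e) (R.submatrix id e) where
  left_sum t := D.left_sum (e t)
  right_sum t := D.right_sum (e t)
  left_add_right i t := D.left_add_right i (e t)
  corner_row_sum := D.corner_row_sum
  corner_col_sum := D.corner_col_sum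
  gaps := by
    have habs (M : Matrix (Fin 3) τ ℤ) : absValues (M.submatrix id e) = absValues M :=
      absValues_submatrix M (Equiv.refl _) e
    rw [habs, habs, Fintype.card_congr e]
    exact D.gaps

/-- The array of layer `l`: the lifted corner in the upper left, lifted strips to its right and
below it, and `Q` in the remaining block. -/
def liftDesign (h : ℕ) (κ : Fin 3 → Λ → ℤ) (ε₁ : τ₁ → ℤˣ) (ε₂ : τ₂ → ℤˣ)
    (C : Matrix (Fin 3) (Fin 3) ℤ) (L R : Matrix (Fin 3) (τ₁ ⊕ τ₂) ℤ)
    (Q : Matrix (τ₂ ⊕ τ₂) (τ₁ ⊕ τ₁) ℤ) (l : Λ) :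
    Matrix (Fin 3 ⊕ (τ₂ ⊕ τ₂)) (Fin 3 ⊕ (τ₁ ⊕ τ₁)) ℤ :=
  fromBlocks (liftCorner h κ C l) (liftStrip h κ ε₁ L.toCols₁ R.toCols₁ l)
    (liftStrip h κ ε₂ L.toCols₂ R.toCols₂ l)ᵀ Q

variable {h d N P k m n : ℕ} {α β : ℤ} {κ : Fin 3 → Λ → ℤ} {ε₁ : τ₁ → ℤˣ} {ε₂ : τ₂ → ℤˣ}
  {C : Matrix (Fin 3) (Fin 3) ℤ} {L R : Matrix (Fin 3) (τ₁ ⊕ τ₂) ℤ}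

theorem exists_mem_absValues_liftDesign (hκ : IsKotzig h κ)
    (Q : Λ → Matrix (τ₂ ⊕ τ₂) (τ₁ ⊕ τ₁) ℤ) {x : ℕ}
    (hx : windowIndex h x ∈ absValues C ∪ (absValues L ∪ absValues R)) :
    ∃ l, x ∈ absValues (liftDesign h κ ε₁ ε₂ C L R (Q l) l) := by
  rw [← fromCols_toCols L, ← fromCols_toCols R, absValues_fromCols, absValues_fromCols,
    union_union_union_comm] at hx
  simp only [liftDesign, absValues_fromBlocks, absValues_transpose]
  obtain hC | hS | hT := hx
  · exact (exists_mem_absValues_liftCorner hκ hC).imp fun _ hl => .inl (.inl hl)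
  · exact (exists_mem_absValues_liftStrip hκ hS).imp fun _ hl => .inl (.inr hl)
  · exact (exists_mem_absValues_liftStrip hκ hT).imp fun _ hl => .inr (.inl hl)

variable [Fintype τ₁] [Fintype τ₂]

theorem IsCoarseDesign.isZeroSum_liftDesign (D : IsCoarseDesign d N α β C L R)
    (hκ : IsKotzig h κ) (hε₁ : ∑ t, (ε₁ t : ℤ) = -α) (hε₂ : ∑ t, (ε₂ t : ℤ) = -β)
    {Q : Matrix (τ₂ ⊕ τ₂) (τ₁ ⊕ τ₁) ℤ} (hQ : IsZeroSum Q) (l : Λ) :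
    IsZeroSum (liftDesign h κ ε₁ ε₂ C L R Q l) := by
  have hrow := sum_liftStrip_row (h := h) (κ := κ) (ε := ε₁) (L := L.toCols₁) (R := R.toCols₁)
    (fun i t => D.left_add_right i (.inl t)) l
  have hcol := sum_liftStrip_row (h := h) (κ := κ) (ε := ε₂) (L := L.toCols₂) (R := R.toCols₂)
    (fun i t => D.left_add_right i (.inr t)) l
  have hcorner_row := sum_liftCorner hκ C l
  have hcorner_col := sum_liftCorner hκ Cᵀ l
  rw [← transpose_liftCorner] at hcorner_col
  simp only [transpose_apply] at hcorner_col
  refine isZeroSum_fromBlocks (fun i => ?_) (fun j => ?_)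
    (sum_liftStrip_col hκ (fun t => D.left_sum (.inl t)) (fun t => D.right_sum (.inl t)) l)
    (sum_liftStrip_col hκ (fun t => D.left_sum (.inr t)) (fun t => D.right_sum (.inr t)) l) hQ
  · rw [hcorner_row, hrow, D.corner_row_sum, hε₁]
    ring
  · simp only [transpose_apply]
    rw [hcorner_col, hcol, D.corner_col_sum, hε₂]
    ring

theorem IsCoarseDesign.exists_isIHS (D : IsCoarseDesign d N α β C L R)
    (hα : α.natAbs ≤ Fintype.card τ₁) (hα_parity : α % 2 = Fintype.card τ₁ % 2)
    (hβ : β.natAbs ≤ Fintype.card τ₂) (hβ_parity : β % 2 = Fintype.card τ₂ % 2)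
    (hQ : AbsorbsRuns (τ₂ ⊕ τ₂) (τ₁ ⊕ τ₁) (Fin P) Unit)
    (hP : Fintype.card τ₁ * Fintype.card τ₂ = P + 2) (hN : d + 4 * N ≤ 4 * P)
    (hd : (2 * h + 1) * d = 4 * k + h + 1)
    (hm : m = 3 + 2 * Fintype.card τ₂) (hn : n = 3 + 2 * Fintype.card τ₁) :
    ∃ A : Fin (2 * h + 1) → Matrix (Fin m) (Fin n) ℤ, IsIHS m n (2 * h + 1) A := by
  obtain ⟨κ, hκ⟩ := exists_isKotzig_three h
  obtain ⟨ε₁, hε₁⟩ := exists_units_sum_eq (τ := τ₁) (a := -α) (by omega) (by omega)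
  obtain ⟨ε₂, hε₂⟩ := exists_units_sum_eq (τ := τ₂) (a := -β) (by omega) (by omega)
  set B := 6 * Fintype.card (τ₁ ⊕ τ₂) + 9 with hB
  have hresidual := (coveredByRuns_windowIndex_notMem_Ico (b := B) hd hN).union
    (D.gaps.windowIndex_preimage h)
  rw [mul_comm N, ← mul_add, Nat.sub_add_cancel (by omega)] at hresidual
  obtain ⟨Q, hQzero, hQcov⟩ := hQ.exists_family hresidual ((2 * h + 1) * (B + 4 * P) + 1)
  have hsize : m * n * (2 * h + 1) = (2 * h + 1) * (B + 4 * P) + 8 * (2 * h + 1) := by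
    rw [hB, Fintype.card_sum, hm, hn]
    linear_combination 4 * (2 * h + 1) * hP
  refine exists_isIHS_of_covers (by simp [hm]; omega) (by simp [hn]; omega)
    (fun l => D.isZeroSum_liftDesign hκ hε₁ hε₂ (hQzero l) l) fun x hx => ?_
  have hblock (hxQ : ∃ l, x ∈ absValues (Q l)) :
      ∃ l, x ∈ absValues (liftDesign h κ ε₁ ε₂ C L R (Q l) l) :=
    hxQ.imp fun l hl => by
      rw [liftDesign, absValues_fromBlocks]
      exact .inr (.inr hl)
  rw [hsize] at hx
  by_cases hlarge : (2 * h + 1) * (B + 4 * P) < x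
  · exact hblock (hQcov x (.inr ⟨hlarge, by linarith [hx.2]⟩))
  by_cases hdesign : windowIndex h x ∈ absValues C ∪ (absValues L ∪ absValues R)
  · exact exists_mem_absValues_liftDesign hκ Q hdesign
  refine hblock (hQcov x (.inl ?_))
  by_cases hwindow : windowIndex h x ∈ Ico d (d + B + 4 * N)
  · exact .inr ⟨hwindow, hdesign⟩
  · exact .inl ⟨⟨hx.1, not_lt.mp hlarge⟩, hwindow⟩

end Assembly

/-! ### Chains -/

/-- The left columns of a chain, a sequence of pairs of columns of weight `(1, 1, -2)` that takes
every absolute value in `chainValues K u v w`. -/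
def chainLeft (K u v w : ℕ) : Matrix (Fin 3) (Fin K ⊕ Fin K) ℤ :=
  of ![Sum.elim (fun t => -(v + 2 * t)) fun t => u + 2 * K - 1 - 2 * t,
    Sum.elim (fun t => -(w + 2 * t)) fun t => -(u + v + w + 2 * K + 2 * t),
    Sum.elim (fun t => v + w + 4 * t) fun t => v + w + 4 * t + 1]

/-- The right columns of a chain, which complete those of `chainLeft` to pairs of weight
`(1, 1, -2)`. -/
def chainRight (K u v w : ℕ) : Matrix (Fin 3) (Fin K ⊕ Fin K) ℤ :=
  of ![Sum.elim (fun t => v + 2 * t + 1) fun t => -(u + 2 * K - 2 - 2 * t),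
    Sum.elim (fun t => w + 2 * t + 1) fun t => u + v + w + 2 * K + 2 * t + 1,
    Sum.elim (fun t => -(v + w + 4 * t + 2)) fun t => -(v + w + 4 * t + 3)]

/-- The absolute values of the entries of a chain: three intervals of length `2K` with prescribed
first elements, an interval of length `4K`, and a last one of length `2K`. -/
def chainValues (K u v w : ℕ) : Set ℕ :=
  Ico u (u + 2 * K) ∪ Ico v (v + 2 * K) ∪ Ico w (w + 2 * K) ∪
    Ico (v + w) (v + w + 4 * K) ∪ Ico (u + v + w + 2 * K) (u + v + w + 4 * K)

theorem exists_eq_add_mul_add {K r a x : ℕ} (hx : x ∈ Ico a (a + r * K)) :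
    ∃ (t : Fin K) (e : Fin r), x = a + r * t + e := by
  have hsub : x - a < r * K := Nat.sub_lt_left_of_lt_add hx.1 hx.2
  have hr : 0 < r := Nat.pos_of_mul_pos_right (Nat.zero_lt_of_lt hsub)
  have hlt : (x - a) / r < K := Nat.div_lt_of_lt_mul hsub
  refine ⟨⟨(x - a) / r, hlt⟩, ⟨(x - a) % r, Nat.mod_lt _ hr⟩, ?_⟩
  rw [add_assoc, Nat.div_add_mod, Nat.add_sub_of_le hx.1]

theorem chainValues_subset (K u v w : ℕ) :
    chainValues K u v w ⊆ absValues (chainLeft K u v w) ∪ absValues (chainRight K u v w) := by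
  refine union_subset (union_subset (union_subset (union_subset ?_ ?_) ?_) ?_) ?_
  · intro x hx
    obtain ⟨t, e, rfl⟩ := exists_eq_add_mul_add hx
    fin_cases e
    · exact .inr ⟨0, .inr t.rev, by simp [chainRight, Fin.val_rev]; omega⟩
    · exact .inl ⟨0, .inr t.rev, by simp [chainLeft, Fin.val_rev]; omega⟩
  · intro x hx
    obtain ⟨t, e, rfl⟩ := exists_eq_add_mul_add hx
    fin_cases e
    · exact .inl ⟨0, .inl t, by simp [chainLeft]; omega⟩
    · exact .inr ⟨0, .inl t, by simp [chainRight]; omega⟩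
  · intro x hx
    obtain ⟨t, e, rfl⟩ := exists_eq_add_mul_add hx
    fin_cases e
    · exact .inl ⟨1, .inl t, by simp [chainLeft]; omega⟩
    · exact .inr ⟨1, .inl t, by simp [chainRight]; omega⟩
  · intro x hx
    obtain ⟨t, e, rfl⟩ := exists_eq_add_mul_add hx
    fin_cases e
    · exact .inl ⟨2, .inl t, by simp [chainLeft]; omega⟩
    · exact .inl ⟨2, .inr t, by simp [chainLeft]; omega⟩
    · exact .inr ⟨2, .inl t, by simp [chainRight]; omega⟩
    · exact .inr ⟨2, .inr t, by simp [chainRight]; omega⟩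
  · intro x hx
    obtain ⟨t, e, rfl⟩ := exists_eq_add_mul_add (a := u + v + w + 2 * K) (r := 2)
      ⟨hx.1, by linarith [hx.2]⟩
    fin_cases e
    · exact .inl ⟨1, .inr t, by simp [chainLeft]; omega⟩
    · exact .inr ⟨1, .inr t, by simp [chainRight]; omega⟩

theorem isCoarseDesign_chain {K u v w d N : ℕ} {α β : ℤ} {C : Matrix (Fin 3) (Fin 3) ℤ}
    (hrow : ∀ i, ∑ j, C i j = α * weight i) (hcol : ∀ j, ∑ i, C i j = β * weight j)
    {S : Set ℕ} (hS : CoveredByRuns N S)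
    (hcover : Ico d (d + 12 * K + 9 + 4 * N) ⊆ absValues C ∪ chainValues K u v w ∪ S) :
    IsCoarseDesign d N α β C (chainLeft K u v w) (chainRight K u v w) where
  left_sum := by
    rintro (t | t) <;> simp [chainLeft, Fin.sum_univ_three] <;> ring
  right_sum := by
    rintro (t | t) <;> simp [chainRight, Fin.sum_univ_three] <;> ring
  left_add_right i := by
    rintro (t | t) <;> fin_cases i <;> simp [chainLeft, chainRight, weight] <;> ring
  corner_row_sum := hrow
  corner_col_sum := hcol
  gaps := by
    have hlength : 6 * Fintype.card (Fin K ⊕ Fin K) + 9 = 12 * K + 9 := by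
      rw [Fintype.card_sum, Fintype.card_fin]
      ring
    rw [hlength, ← add_assoc]
    exact hS.mono (sdiff_subset_iff.mpr (hcover.trans
      (union_subset_union_left _ (union_subset_union_right _ (chainValues_subset K u v w)))))

/-! ### The eight designs

The names record the parity of `K`, the residue of `d` modulo four, and the parity of `α` and `β`.
Each corner consists of values skipped by the chain. -/

theorem mem_absValues_three {a b c d e f p q r : ℤ} {x : ℕ} :
    x ∈ absValues !![a, b, c; d, e, f; p, q, r] ↔
      a.natAbs = x ∨ b.natAbs = x ∨ c.natAbs = x ∨ d.natAbs = x ∨ e.natAbs = x ∨ f.natAbs = x ∨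
        p.natAbs = x ∨ q.natAbs = x ∨ r.natAbs = x := by
  simp [absValues, Fin.exists_fin_succ, or_assoc]

theorem mem_chainValues {K u v w x : ℕ} :
    x ∈ chainValues K u v w ↔
      (u ≤ x ∧ x < u + 2 * K) ∨ (v ≤ x ∧ x < v + 2 * K) ∨ (w ≤ x ∧ x < w + 2 * K) ∨
        (v + w ≤ x ∧ x < v + w + 4 * K) ∨
        (u + v + w + 2 * K ≤ x ∧ x < u + v + w + 4 * K) := by
  simp only [chainValues, mem_union, mem_Ico, or_assoc]

theorem isCoarseDesign_oddLength_startTwo_evenImbalance {K k : ℕ} (hK : K = 2 * k + 3) :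
    IsCoarseDesign (2 * K) (k + 1) 0 0
      !![16 * K + 6, -(8 * K + 1), -(8 * K + 5);
        -(8 * K + 2), -(8 * K + 3), 16 * K + 5;
        -(8 * K + 4), 16 * K + 4, -(8 * K)]
      (chainLeft K (2 * K) (4 * K) (6 * K))
      (chainRight K (2 * K) (4 * K) (6 * K)) := by
  refine isCoarseDesign_chain (fun i => ?_) (fun j => ?_)
    ((coveredByRuns_Ico (8 * K + 6) k).union
      (coveredByRuns_Ico (16 * K) 1)) fun x hx => ?_
  · fin_cases i <;> simp [Fin.sum_univ_three, weight] <;> ring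
  · fin_cases j <;> simp [Fin.sum_univ_three, weight] <;> ring
  · simp only [mem_absValues_three, mem_chainValues, mem_union, mem_Ico] at hx ⊢
    omega

theorem isCoarseDesign_oddLength_startTwo_oddImbalance {K k : ℕ} (hK : K = 2 * k + 3) :
    IsCoarseDesign (2 * K) (k + 1) (-1) (-1)
      !![-(8 * K + 5), 16 * K + 5, -(8 * K + 1);
        16 * K + 4, -(8 * K + 2), -(8 * K + 3);
        -(8 * K), -(8 * K + 4), 16 * K + 6]
      (chainLeft K (2 * K) (4 * K) (6 * K))
      (chainRight K (2 * K) (4 * K) (6 * K)) := by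
  refine isCoarseDesign_chain (fun i => ?_) (fun j => ?_)
    ((coveredByRuns_Ico (8 * K + 6) k).union
      (coveredByRuns_Ico (16 * K) 1)) fun x hx => ?_
  · fin_cases i <;> simp [Fin.sum_univ_three, weight] <;> ring
  · fin_cases j <;> simp [Fin.sum_univ_three, weight] <;> ring
  · simp only [mem_absValues_three, mem_chainValues, mem_union, mem_Ico] at hx ⊢
    omega

theorem isCoarseDesign_oddLength_startZero_evenImbalance {K k : ℕ} (hK : K = 2 * k + 3) :
    IsCoarseDesign 4 (k + 1 + k + 1) 2 2
      !![10 * K + 8, -4, -(10 * K + 2);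
        -(4 * K), -(6 * K + 1), 10 * K + 3;
        -(6 * K + 6), 6 * K + 7, -5]
      (chainLeft K (2 * K) (4 * K + 1) (6 * K + 8))
      (chainRight K (2 * K) (4 * K + 1) (6 * K + 8)) := by
  refine isCoarseDesign_chain (fun i => ?_) (fun j => ?_)
    ((((coveredByRuns_Ico 6 k).union
      (coveredByRuns_Ico (6 * K + 2) 1)).union
      (coveredByRuns_Ico (8 * K + 8) k)).union
      (coveredByRuns_Ico (10 * K + 4) 1)) fun x hx => ?_
  · fin_cases i <;> simp [Fin.sum_univ_three, weight] <;> ring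
  · fin_cases j <;> simp [Fin.sum_univ_three, weight] <;> ring
  · simp only [mem_absValues_three, mem_chainValues, mem_union, mem_Ico] at hx ⊢
    omega

theorem isCoarseDesign_oddLength_startZero_oddImbalance {K k : ℕ} (hK : K = 2 * k + 3) :
    IsCoarseDesign 4 (k + 1 + 1 + (k + 3)) 1 1
      !![-(4 * K), -5, 4 * K + 6;
        -4, -(6 * K + 7), 6 * K + 12;
        4 * K + 5, 6 * K + 13, -(10 * K + 20)]
      (chainLeft K (2 * K) (4 * K + 7) (6 * K + 14))
      (chainRight K (2 * K) (4 * K + 7) (6 * K + 14)) := by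
  refine isCoarseDesign_chain (fun i => ?_) (fun j => ?_)
    ((((coveredByRuns_Ico 6 k).union
      (coveredByRuns_Ico (4 * K + 1) 1)).union
      (coveredByRuns_Ico (6 * K + 8) 1)).union
      (coveredByRuns_Ico (8 * K + 14) (k + 3))) fun x hx => ?_
  · fin_cases i <;> simp [Fin.sum_univ_three, weight] <;> ring
  · fin_cases j <;> simp [Fin.sum_univ_three, weight] <;> ring
  · simp only [mem_absValues_three, mem_chainValues, mem_union, mem_Ico] at hx ⊢
    omega

theorem isCoarseDesign_evenLength_startTwo_evenImbalance {K k : ℕ} (hK : K = 2 * k + 4) :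
    IsCoarseDesign 2 ((k + 1) + (k + 1)) 2 2
      !![-(16 * K + 1), 3, 16 * K;
        8 * K + 3, 8 * K + 1, -(16 * K + 2);
        8 * K, -(8 * K + 2), -2]
      (chainLeft K (2 * K) (4 * K) (6 * K))
      (chainRight K (2 * K) (4 * K) (6 * K)) := by
  refine isCoarseDesign_chain (fun i => ?_) (fun j => ?_)
    ((coveredByRuns_Ico 4 (k + 1)).union
      (coveredByRuns_Ico (8 * K + 4) (k + 1))) fun x hx => ?_
  · fin_cases i <;> simp [Fin.sum_univ_three, weight] <;> ring
  · fin_cases j <;> simp [Fin.sum_univ_three, weight] <;> ring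
  · simp only [mem_absValues_three, mem_chainValues, mem_union, mem_Ico] at hx ⊢
    omega

theorem isCoarseDesign_evenLength_startTwo_oddImbalance {K k : ℕ} (hK : K = 2 * k + 4) :
    IsCoarseDesign 2 ((k + 1) + (k + 1)) (-1) (-1)
      !![16 * K + 2, -2, -(16 * K + 1);
        -3, -(8 * K + 1), 8 * K + 3;
        -(16 * K), 8 * K + 2, 8 * K]
      (chainLeft K (2 * K) (4 * K) (6 * K))
      (chainRight K (2 * K) (4 * K) (6 * K)) := by
  refine isCoarseDesign_chain (fun i => ?_) (fun j => ?_)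
    ((coveredByRuns_Ico 4 (k + 1)).union
      (coveredByRuns_Ico (8 * K + 4) (k + 1))) fun x hx => ?_
  · fin_cases i <;> simp [Fin.sum_univ_three, weight] <;> ring
  · fin_cases j <;> simp [Fin.sum_univ_three, weight] <;> ring
  · simp only [mem_absValues_three, mem_chainValues, mem_union, mem_Ico] at hx ⊢
    omega

theorem isCoarseDesign_evenLength_startZero_evenImbalance {K k : ℕ} (hK : K = 2 * k + 4) :
    IsCoarseDesign (2 * K) (1 + (k + 3)) (-2) 2
      !![-(8 * K + 8), -(8 * K + 10), 16 * K + 16;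
        4 * K + 4, 4 * K + 5, -(8 * K + 11);
        4 * K + 6, 4 * K + 7, -(8 * K + 9)]
      (chainLeft K (2 * K) (4 * K + 8) (6 * K + 8))
      (chainRight K (2 * K) (4 * K + 8) (6 * K + 8)) := by
  refine isCoarseDesign_chain (fun i => ?_) (fun j => ?_)
    ((coveredByRuns_Ico (4 * K) 1).union
      (coveredByRuns_Ico (8 * K + 12) (k + 3))) fun x hx => ?_
  · fin_cases i <;> simp [Fin.sum_univ_three, weight] <;> ring
  · fin_cases j <;> simp [Fin.sum_univ_three, weight] <;> ring
  · simp only [mem_absValues_three, mem_chainValues, mem_union, mem_Ico] at hx ⊢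
    omega

theorem isCoarseDesign_evenLength_startZero_oddImbalance {K k : ℕ} (hK : K = 2 * k + 4) :
    IsCoarseDesign (2 * K) (1 + (k + 3) + 1) 1 1
      !![-(8 * K + 11), 4 * K + 5, 4 * K + 7;
        16 * K + 20, -(8 * K + 10), -(8 * K + 9);
        -(8 * K + 8), 4 * K + 6, 4 * K]
      (chainLeft K (2 * K) (4 * K + 8) (6 * K + 8))
      (chainRight K (2 * K) (4 * K + 8) (6 * K + 8)) := by
  refine isCoarseDesign_chain (fun i => ?_) (fun j => ?_)
    (((coveredByRuns_Ico (4 * K + 1) 1).union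
      (coveredByRuns_Ico (8 * K + 12) (k + 3))).union
      (coveredByRuns_Ico (16 * K + 16) 1)) fun x hx => ?_
  · fin_cases i <;> simp [Fin.sum_univ_three, weight] <;> ring
  · fin_cases j <;> simp [Fin.sum_univ_three, weight] <;> ring
  · simp only [mem_absValues_three, mem_chainValues, mem_union, mem_Ico] at hx ⊢
    omega

/-- The parity of `α` and `β` is prescribed because a sum of `T` signs is congruent to `T` modulo
two, the residue of `d` because `(2h + 1)d - h`, the first value in the windows of the design, has
to be congruent to one modulo four. -/
theorem exists_isCoarseDesign {K h : ℕ} (hK : 3 ≤ K) (hh : h % 2 = 1) (T : ℕ) :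
    ∃ (d N : ℕ) (α β : ℤ) (C : Matrix (Fin 3) (Fin 3) ℤ) (L R : Matrix (Fin 3) (Fin K ⊕ Fin K) ℤ),
      IsCoarseDesign d N α β C L R ∧ d % 4 = (h + 1) % 4 ∧ 0 < d ∧ d + 4 * N + 24 ≤ 16 * K ∧
        (α.natAbs ≤ 2 ∧ α % 2 = T % 2) ∧ β.natAbs ≤ 2 ∧ β % 2 = T % 2 := by
  obtain ⟨k, hk⟩ | ⟨k, hk⟩ : (∃ k, K = 2 * k + 3) ∨ ∃ k, K = 2 * k + 4 := by
    obtain heven | hodd := Nat.mod_two_eq_zero_or_one K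
    · exact .inr ⟨(K - 4) / 2, by omega⟩
    · exact .inl ⟨(K - 3) / 2, by omega⟩
  all_goals
    obtain hd | hd : (h + 1) % 4 = 2 ∨ (h + 1) % 4 = 0 := by omega
  all_goals
    obtain hT | hT := Nat.mod_two_eq_zero_or_one T
  · exact ⟨_, _, _, _, _, _, _, isCoarseDesign_oddLength_startTwo_evenImbalance hk, by omega⟩
  · exact ⟨_, _, _, _, _, _, _, isCoarseDesign_oddLength_startTwo_oddImbalance hk, by omega⟩
  · exact ⟨_, _, _, _, _, _, _, isCoarseDesign_oddLength_startZero_evenImbalance hk, by omega⟩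
  · exact ⟨_, _, _, _, _, _, _, isCoarseDesign_oddLength_startZero_oddImbalance hk, by omega⟩
  · exact ⟨_, _, _, _, _, _, _, isCoarseDesign_evenLength_startTwo_evenImbalance hk, by omega⟩
  · exact ⟨_, _, _, _, _, _, _, isCoarseDesign_evenLength_startTwo_oddImbalance hk, by omega⟩
  · exact ⟨_, _, _, _, _, _, _, isCoarseDesign_evenLength_startZero_evenImbalance hk, by omega⟩
  · exact ⟨_, _, _, _, _, _, _, isCoarseDesign_evenLength_startZero_oddImbalance hk, by omega⟩

theorem exists_mul_eq_four_mul_add {h d : ℕ} (hh : h % 2 = 1) (hd : d % 4 = (h + 1) % 4)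
    (hd0 : 0 < d) : ∃ k, (2 * h + 1) * d = 4 * k + h + 1 := by
  have hmod : (2 * h + 1) * d ≡ h + 1 [MOD 4] := by
    have hfactor : (2 * h + 1) ≡ 3 [MOD 4] := by
      simp only [Nat.ModEq]
      omega
    refine (hfactor.mul hd).trans ?_
    simp only [Nat.ModEq]
    omega
  have hle : h + 1 ≤ (2 * h + 1) * d := by nlinarith
  exact ⟨((2 * h + 1) * d - (h + 1)) / 4, by
    have := (Nat.modEq_iff_dvd' hle).mp hmod.symm
    omega⟩

theorem exists_IHS_c3
    (m n c : ℕ) (hm : 0 < m) (hn : 0 < n) (hc : 0 < c)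
    (hcmod : c % 4 = 3)
    (hmn : (m % 4 = 1 ∧ n % 4 = 1) ∨ (m % 4 = 3 ∧ n % 4 = 3))
    (hm7 : 7 ≤ m) (hn7 : 7 ≤ n) (hne : ¬(m = 7 ∧ n = 7)) :
    ∃ A : Fin c → Matrix (Fin m) (Fin n) ℤ, IsIHS m n c A := by
  obtain ⟨h, hh, rfl⟩ : ∃ h, h % 2 = 1 ∧ c = 2 * h + 1 := ⟨c / 2, by omega⟩
  obtain ⟨s, rfl⟩ : ∃ s, m = 3 + 2 * (s + 2) := ⟨(m - 7) / 2, by omega⟩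
  obtain ⟨t, rfl⟩ : ∃ t, n = 3 + 2 * (t + 2) := ⟨(n - 7) / 2, by omega⟩
  obtain ⟨K, hK⟩ : ∃ K, s + 2 + (t + 2) = 2 * K := ⟨(s + t) / 2 + 2, by omega⟩
  obtain ⟨d, N, α, β, C, L, R, D, hd, hd0, hN, hα, hβ⟩ :=
    exists_isCoarseDesign (K := K) (by omega) hh s
  obtain ⟨k, hk⟩ := exists_mul_eq_four_mul_add hh hd hd0
  let e : Fin (t + 2) ⊕ Fin (s + 2) ≃ Fin K ⊕ Fin K := Fintype.equivOfCardEq (by simp; omega)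
  have hruns : AbsorbsRuns (Fin (s + 2) ⊕ Fin (s + 2)) (Fin (t + 2) ⊕ Fin (t + 2))
      (Fin (s * t + 2 * s + 2 * t + 2)) Unit :=
    absorbsRuns_of_card (s := s + 2) (t := t + 2) (by omega) (by omega) (by omega)
      (by simp; ring) (by simp; ring) (by simp; ring)
  have hbound : d + 4 * N ≤ 4 * (s * t + 2 * s + 2 * t + 2) := by nlinarith [Nat.zero_le (s * t)]
  exact (D.submatrix e).exists_isIHS (by simp; omega) (by simp; omega) (by simp; omega)
    (by simp; omega) hruns (by simp; ring) hbound hk (by simp) (by simp)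
end
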